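/- arXiv:1902.00368 — 2 statements merged into one kernel-verified Lean document; each statement's English description precedes it below -/
import Mathlib

section
/- Let b ∈ [0,1) and let (τ,c) ∈ 𝔇. Then the monotone traveling front of the neutral KPP-Fisher equation with speed c is unique up to translation: if φ and ψ are both monotone traveling fronts with the same speed c, then there exists h ∈ ℝ such that ψ(t) = φ(t + h) for all t ∈ ℝ. -/
open Filter

/-- Characteristic function χ₀(z) = z² − c·z + 1/(1 − b·e^{−z·c·τ}). -/
noncomputable def chi0 (b c τ z : ℝ) : ℝ :=
  z ^ 2 - c * z + 1 / (1 - b * Real.exp (-(z * c * τ)))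

/-- Characteristic function χ₁(z) = z² − c·z − e^{−z·c·τ}/(1 − b·e^{−z·c·τ}). -/
noncomputable def chi1 (b c τ z : ℝ) : ℝ :=
  z ^ 2 - c * z - Real.exp (-(z * c * τ)) / (1 - b * Real.exp (-(z * c * τ)))

/-- The domain 𝔇: χ₀ has a positive real zero and χ₁ has a negative real zero. -/
def inD (b τ c : ℝ) : Prop :=
  (∃ z > (0 : ℝ), chi0 b c τ z = 0) ∧ (∃ z < (0 : ℝ), chi1 b c τ z = 0)

/-- A monotone traveling front of the neutral KPP-Fisher equation with speed `c`. -/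
def IsMonotoneFront (b c τ : ℝ) (φ : ℝ → ℝ) : Prop :=
  Monotone φ ∧
  ContDiff ℝ 2 (fun t => φ t - b * φ (t - c * τ)) ∧
  (∀ t : ℝ,
    deriv (deriv (fun r => φ r - b * φ (r - c * τ))) t
      - c * deriv (fun r => φ r - b * φ (r - c * τ)) t
      + φ t * (1 - φ (t - c * τ)) = 0) ∧
  Tendsto φ atBot (nhds 0) ∧ Tendsto φ atTop (nhds 1)

/-!
In the exponential weight `e^{-lam t}` given by the smaller zero `lam` of `χ₀`, the difference of
two fronts solves a linear system with a fast decaying forcing. Adding to the flux variable `a` of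
this system a memory term, which depends linearly on the past of `a` with gain less than one, yields
a monotone quantity; hence for each front `a` has a limit at `-∞`, and this limit is positive. A
translation multiplies it by a positive factor, so two fronts can be translated to have the same
limit. Their difference then decays so fast that its neutral part either vanishes near `-∞`, and
therefore everywhere because the delay equation propagates zero forward, or has a fixed sign near
`-∞`, which a maximum principle rules out.

Positive zeros of `χ₀` exist because there is a front: its neutral part `v` satisfies `v' ≤ c v`,
and a bound `v' ≤ κ v` with `χ₀ > 0` at `κ` can always be improved to a smaller `κ`.
-/

/-! ### Differential inequalities and the neutral recursion -/

section Calculus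

variable {f f' : ℝ → ℝ} {s t k : ℝ}

theorem le_of_hasDerivAt_nonneg (hst : s ≤ t) (hf : ∀ r ∈ Set.Icc s t, HasDerivAt f (f' r) r)
    (hf' : ∀ r ∈ Set.Icc s t, 0 ≤ f' r) : f s ≤ f t :=
  monotoneOn_of_hasDerivWithinAt_nonneg (convex_Icc s t)
    (fun r hr => (hf r hr).continuousAt.continuousWithinAt)
    (fun r hr => (hf r (interior_subset hr)).hasDerivWithinAt)
    (fun r hr => hf' r (interior_subset hr))
    (Set.left_mem_Icc.2 hst) (Set.right_mem_Icc.2 hst) hst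

theorem mul_sub_le_sub_of_le_hasDerivAt (hst : s ≤ t)
    (hf : ∀ r ∈ Set.Icc s t, HasDerivAt f (f' r) r) (hf' : ∀ r ∈ Set.Icc s t, k ≤ f' r) :
    k * (t - s) ≤ f t - f s := by
  have := le_of_hasDerivAt_nonneg hst
    (fun r hr => (hf r hr).sub ((hasDerivAt_id r).const_mul k))
    (fun r hr => by linarith [hf' r hr])
  simp only [Pi.sub_apply, id] at this
  linarith

theorem sub_le_mul_sub_of_hasDerivAt_le (hst : s ≤ t)
    (hf : ∀ r ∈ Set.Icc s t, HasDerivAt f (f' r) r) (hf' : ∀ r ∈ Set.Icc s t, f' r ≤ k) :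
    f t - f s ≤ k * (t - s) := by
  have := mul_sub_le_sub_of_le_hasDerivAt hst (fun r hr => (hf r hr).neg)
    (fun r hr => neg_le_neg (hf' r hr))
  simp only [Pi.neg_apply] at this
  linarith

theorem eq_of_hasDerivAt_zero (hf : ∀ r, HasDerivAt f 0 r) (s t : ℝ) : f s = f t :=
  is_const_of_deriv_eq_zero (fun r => (hf r).differentiableAt) (fun r => (hf r).deriv) s t

theorem hasDerivAt_exp_neg (k t : ℝ) :
    HasDerivAt (fun r => Real.exp (-(k * r))) (-k * Real.exp (-(k * t))) t :=
  ((hasDerivAt_id t).const_mul k).neg.exp.congr_deriv (by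
    simp only [Pi.neg_apply, id, mul_one]; ring)

theorem hasDerivAt_exp_neg_mul {f₁ : ℝ} (k : ℝ) (hf : HasDerivAt f f₁ t) :
    HasDerivAt (fun r => Real.exp (-(k * r)) * f r) (Real.exp (-(k * t)) * (f₁ - k * f t)) t :=
  ((hasDerivAt_exp_neg k t).mul hf).congr_deriv (by ring)

theorem exp_mul_le_of_le_hasDerivAt (hst : s ≤ t)
    (hf : ∀ r ∈ Set.Icc s t, HasDerivAt f (f' r) r) (hf' : ∀ r ∈ Set.Icc s t, k * f r ≤ f' r) :
    Real.exp (-(k * s)) * f s ≤ Real.exp (-(k * t)) * f t :=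
  le_of_hasDerivAt_nonneg hst (fun r hr => hasDerivAt_exp_neg_mul k (hf r hr))
    fun r hr => mul_nonneg (Real.exp_pos _).le (sub_nonneg.2 (hf' r hr))

theorem exp_mul_le_of_hasDerivAt_le (hst : s ≤ t)
    (hf : ∀ r ∈ Set.Icc s t, HasDerivAt f (f' r) r) (hf' : ∀ r ∈ Set.Icc s t, f' r ≤ k * f r) :
    Real.exp (-(k * t)) * f t ≤ Real.exp (-(k * s)) * f s := by
  have := exp_mul_le_of_le_hasDerivAt (k := k) hst (fun r hr => (hf r hr).neg)
    (fun r hr => by simp only [Pi.neg_apply]; linarith [hf' r hr])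
  simpa only [Pi.neg_apply, mul_neg, neg_le_neg_iff] using this

theorem le_exp_mul_of_hasDerivAt_le (hst : s ≤ t)
    (hf : ∀ r ∈ Set.Icc s t, HasDerivAt f (f' r) r) (hf' : ∀ r ∈ Set.Icc s t, f' r ≤ k * f r) :
    f t ≤ Real.exp (k * (t - s)) * f s := by
  have := mul_le_mul_of_nonneg_left (exp_mul_le_of_hasDerivAt_le hst hf hf')
    (Real.exp_pos (k * t)).le
  rwa [← mul_assoc, ← mul_assoc, ← Real.exp_add, ← Real.exp_add, add_neg_cancel, Real.exp_zero,
    one_mul, ← sub_eq_add_neg, ← mul_sub] at this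

theorem le_exp_mul_of_le_hasDerivAt (hst : s ≤ t)
    (hf : ∀ r ∈ Set.Icc s t, HasDerivAt f (f' r) r) (hf' : ∀ r ∈ Set.Icc s t, k * f r ≤ f' r) :
    f s ≤ Real.exp (k * (s - t)) * f t := by
  have := mul_le_mul_of_nonneg_left (exp_mul_le_of_le_hasDerivAt hst hf hf')
    (Real.exp_pos (k * s)).le
  rwa [← mul_assoc, ← mul_assoc, ← Real.exp_add, ← Real.exp_add, add_neg_cancel, Real.exp_zero,
    one_mul, ← sub_eq_add_neg, ← mul_sub] at this

theorem hasDerivAt_nonneg_of_left_max {f₁ : ℝ} (hf : HasDerivAt f f₁ t)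
    (hmax : ∀ᶠ s in nhdsWithin t (Set.Iio t), f s ≤ f t) : 0 ≤ f₁ := by
  refine ge_of_tendsto (hasDerivAt_iff_tendsto_slope_left_right.1 hf).1 ?_
  filter_upwards [hmax, self_mem_nhdsWithin] with s hs (hst : s < t)
  rw [slope_def_field]
  exact div_nonneg_of_nonpos (sub_nonpos.2 hs) (sub_nonpos.2 hst.le)

theorem lt_of_hasDerivAt_lt_neg_of_bounded {K m d T : ℝ} (hd : 0 < d)
    (hf : ∀ t, HasDerivAt f (f' t) t) (hK : ∀ t, f t ≤ K)
    (hf' : ∀ t ≤ T, m ≤ f t → f' t < -d) (ht : t ≤ T) : f t < m := by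
  by_contra! hm
  set L := (K - m) / d + 1
  have hdL : d * L = K - m + d := by rw [mul_add, mul_div_cancel₀ _ hd.ne', mul_one]
  have hL : 0 ≤ L := by
    have := div_nonneg (sub_nonneg.2 (hm.trans (hK t))) hd.le
    linarith
  have hcont : Continuous fun r => f r + d * r :=
    (continuous_iff_continuousAt.2 fun r => (hf r).continuousAt).add (continuous_const_mul d)
  obtain ⟨t₁, ht₁, hmax⟩ := (isCompact_Icc (a := t - L) (b := t)).exists_isMaxOn
    ⟨t, by linarith, le_rfl⟩ hcont.continuousOn
  have hge : f t + d * t ≤ f t₁ + d * t₁ := hmax (Set.right_mem_Icc.2 (by linarith))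
  have hmt₁ : m ≤ f t₁ := by linarith [mul_nonneg hd.le (sub_nonneg.2 ht₁.2)]
  rcases ht₁.1.eq_or_lt with hleft | hleft
  · rw [← hleft] at hge
    linarith [hK (t - L)]
  · have := hasDerivAt_nonneg_of_left_max ((hf t₁).add ((hasDerivAt_id t₁).const_mul d)) (by
      filter_upwards [Ioo_mem_nhdsLT hleft] with s hs
      exact hmax ⟨hs.1.le, hs.2.le.trans ht₁.2⟩)
    linarith [hf' t₁ (ht₁.2.trans ht) hmt₁]

end Calculus

theorem exp_neg_mul_le_one {k s : ℝ} (hk : 0 ≤ k) (hs : 0 ≤ s) : Real.exp (-(k * s)) ≤ 1 :=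
  Real.exp_le_one_iff.2 (neg_nonpos.2 (mul_nonneg hk hs))

theorem abs_integral_le_of_exp_bound {lam C : ℝ} (hl : 0 ≤ lam) {F : ℝ → ℝ}
    (hF : ∀ t, |F t| ≤ C * Real.exp (-(lam * t))) {r : ℝ} (hr : r ≤ 0) :
    |∫ s in (0 : ℝ)..r, F s| ≤ C * (1 + |r|) * Real.exp (-(lam * r)) := by
  have hC : 0 ≤ C := by simpa using (abs_nonneg _).trans (hF 0)
  have hint : ‖∫ s in (0 : ℝ)..r, F s‖ ≤ C * Real.exp (-(lam * r)) * |r - 0| := by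
    refine intervalIntegral.norm_integral_le_of_norm_le_const fun s hs => (hF s).trans ?_
    rw [Set.uIoc_of_ge hr] at hs
    have : lam * r ≤ lam * s := mul_le_mul_of_nonneg_left hs.1.le hl
    gcongr
  rw [Real.norm_eq_abs, sub_zero] at hint
  linarith [mul_nonneg hC (Real.exp_pos (-(lam * r))).le]

/-- Iterating the backward shift by `h` with factor `q` annihilates `G` in the limit; this is the
growth condition under which the neutral relation `F t = G t + q F (t - h)` determines `F`. -/
def ShiftDecay (q h : ℝ) (G : ℝ → ℝ) : Prop :=
  ∀ t : ℝ, Tendsto (fun n : ℕ => q ^ n * G (t - n * h)) atTop (nhds 0)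

namespace ShiftDecay

variable {q h : ℝ} {F G : ℝ → ℝ}

theorem const_mul (k : ℝ) (hF : ShiftDecay q h F) : ShiftDecay q h (fun t => k * F t) :=
  fun t => by simpa only [mul_left_comm, mul_zero] using (hF t).const_mul k

theorem sub (hF : ShiftDecay q h F) (hG : ShiftDecay q h G) :
    ShiftDecay q h (fun t => F t - G t) := fun t => by
  simpa only [mul_sub, sub_zero] using (hF t).sub (hG t)

theorem shift (hF : ShiftDecay q h F) (k : ℝ) : ShiftDecay q h (fun t => F (t - k)) :=
  fun t => (hF (t - k)).congr fun n => by rw [sub_right_comm]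

theorem const (hq0 : 0 ≤ q) (hq1 : q < 1) (k : ℝ) : ShiftDecay q h (fun _ => k) := fun _ => by
  simpa only [zero_mul] using (tendsto_pow_atTop_nhds_zero_of_lt_one hq0 hq1).mul_const k

theorem of_linear_mul_exp_bound {b lam C : ℝ} (hb0 : 0 ≤ b) (hb1 : b < 1) (hh : 0 < h)
    (hG : ∀ r ≤ 0, |G r| ≤ C * (1 + |r|) * Real.exp (-(lam * r))) :
    ShiftDecay (b * Real.exp (-(lam * h))) h G := by
  intro t
  have hC : 0 ≤ C := by simpa using (abs_nonneg _).trans (hG 0 le_rfl)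
  have hlim : Tendsto (fun n : ℕ => C * Real.exp (-(lam * t)) * ((1 + |t|) * b ^ n
      + h * (n * b ^ n))) atTop (nhds 0) := by
    simpa using (((tendsto_pow_atTop_nhds_zero_of_lt_one hb0 hb1).const_mul (1 + |t|)).add
      ((tendsto_self_mul_const_pow_of_lt_one hb0 hb1).const_mul h)).const_mul
        (C * Real.exp (-(lam * t)))
  refine squeeze_zero_norm' ?_ hlim
  obtain ⟨N, hN⟩ := exists_nat_ge (t / h)
  filter_upwards [eventually_ge_atTop N] with n hn
  have hle : t - n * h ≤ 0 := by
    have := (div_le_iff₀ hh).1 (hN.trans (by exact_mod_cast hn : (N : ℝ) ≤ n))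
    linarith
  have hexp : Real.exp (-(lam * h)) ^ n * Real.exp (-(lam * (t - n * h)))
      = Real.exp (-(lam * t)) := by
    rw [← Real.exp_nat_mul, ← Real.exp_add]; congr 1; ring
  have habs : |t - n * h| ≤ |t| + n * h := by
    simpa only [abs_of_nonneg (by positivity : (0 : ℝ) ≤ n * h)] using abs_sub t (n * h)
  rw [Real.norm_eq_abs, abs_mul, abs_of_nonneg (by positivity), mul_pow]
  calc b ^ n * Real.exp (-(lam * h)) ^ n * |G (t - n * h)|
      ≤ b ^ n * Real.exp (-(lam * h)) ^ n *
        (C * (1 + |t - n * h|) * Real.exp (-(lam * (t - n * h)))) := by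
        gcongr; exact hG _ hle
    _ = b ^ n * C * (1 + |t - n * h|) * Real.exp (-(lam * t)) := by rw [← hexp]; ring
    _ ≤ b ^ n * C * (1 + (|t| + n * h)) * Real.exp (-(lam * t)) := by gcongr
    _ = _ := by ring

theorem of_exp_bound {b lam C : ℝ} (hb0 : 0 ≤ b) (hb1 : b < 1) (hh : 0 < h)
    (hG : ∀ r, |G r| ≤ C * Real.exp (-(lam * r))) :
    ShiftDecay (b * Real.exp (-(lam * h))) h G := by
  have hC : 0 ≤ C := by simpa using (abs_nonneg _).trans (hG 0)
  refine of_linear_mul_exp_bound (C := C) hb0 hb1 hh fun r _ => (hG r).trans ?_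
  gcongr
  exact le_mul_of_one_le_right hC (le_add_of_nonneg_right (abs_nonneg r))

theorem le_div (hF : ShiftDecay q h F) (hq0 : 0 ≤ q) (hq1 : q < 1) (hh : 0 ≤ h) {s t : ℝ}
    (hle : ∀ r ≤ t, F r ≤ q * F (r - h) + s) : F t ≤ s / (1 - q) := by
  have hiter : ∀ n : ℕ, F t ≤ q ^ n * F (t - n * h) + s / (1 - q) * (1 - q ^ n) := by
    intro n
    induction n with
    | zero => simp
    | succ n ih =>
      have hnh : 0 ≤ n * h := by positivity
      have hshift : t - n * h - h = t - (n + 1 : ℕ) * h := by push_cast; ring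
      have hstep := mul_le_mul_of_nonneg_left (hle (t - n * h) (by linarith)) (pow_nonneg hq0 n)
      have hs : s / (1 - q) * (1 - q) = s := div_mul_cancel₀ _ (by linarith)
      rw [hshift] at hstep
      rw [pow_succ]
      linear_combination ih + hstep - q ^ n * hs
  have hlim : Tendsto (fun n : ℕ => q ^ n * F (t - n * h) + s / (1 - q) * (1 - q ^ n)) atTop
      (nhds (s / (1 - q))) := by
    simpa using (hF t).add
      (((tendsto_pow_atTop_nhds_zero_of_lt_one hq0 hq1).const_sub 1).const_mul (s / (1 - q)))
  exact ge_of_tendsto' hlim hiter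

end ShiftDecay

section ExponentialIntegrals

/-- The truncated Laplace integral `∫₀ˢ e^{-δ r} dr`, which is `s` for `δ = 0`. -/
noncomputable def expInt (δ s : ℝ) : ℝ := ∫ r in (0 : ℝ)..s, Real.exp (-(δ * r))

/-- The iterated integral of `e^{-δ r}`, the primitive of `expInt δ` vanishing at `0`. -/
noncomputable def expIntTwo (δ s : ℝ) : ℝ := ∫ r in (0 : ℝ)..s, expInt δ r

theorem hasDerivAt_expInt (δ s : ℝ) : HasDerivAt (expInt δ) (Real.exp (-(δ * s))) s :=
  (Continuous.integral_hasStrictDerivAt (by fun_prop) 0 s).hasDerivAt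

theorem hasDerivAt_expIntTwo (δ s : ℝ) : HasDerivAt (expIntTwo δ) (expInt δ s) s :=
  (Continuous.integral_hasStrictDerivAt
    (continuous_iff_continuousAt.2 fun r => (hasDerivAt_expInt δ r).continuousAt) 0 s).hasDerivAt

theorem expInt_zero_right (δ : ℝ) : expInt δ 0 = 0 := intervalIntegral.integral_same

theorem expIntTwo_zero_right (δ : ℝ) : expIntTwo δ 0 = 0 := intervalIntegral.integral_same

theorem expInt_zero_left (s : ℝ) : expInt 0 s = s := by simp [expInt]

theorem mul_expInt (δ s : ℝ) : δ * expInt δ s = 1 - Real.exp (-(δ * s)) := by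
  have := eq_of_hasDerivAt_zero (f := fun r => δ * expInt δ r + Real.exp (-(δ * r)))
    (fun r => (((hasDerivAt_expInt δ r).const_mul δ).add
      (hasDerivAt_exp_neg δ r)).congr_deriv (by ring)) s 0
  simp only [expInt_zero_right, mul_zero, neg_zero, Real.exp_zero, zero_add] at this
  linarith

theorem mul_expIntTwo (δ s : ℝ) : δ * expIntTwo δ s = s - expInt δ s := by
  have := eq_of_hasDerivAt_zero (f := fun r => δ * expIntTwo δ r - (r - expInt δ r))
    (fun r => (((hasDerivAt_expIntTwo δ r).const_mul δ).sub
      ((hasDerivAt_id r).sub (hasDerivAt_expInt δ r))).congr_deriv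
        (by rw [mul_expInt]; ring)) s 0
  simp only [expInt_zero_right, expIntTwo_zero_right, mul_zero, sub_zero] at this
  linarith

theorem expInt_nonneg (δ : ℝ) {s : ℝ} (hs : 0 ≤ s) : 0 ≤ expInt δ s :=
  intervalIntegral.integral_nonneg hs fun _ _ => (Real.exp_pos _).le

theorem expInt_le {δ s : ℝ} (hδ : 0 ≤ δ) (hs : 0 ≤ s) : expInt δ s ≤ s := by
  have := sub_le_mul_sub_of_hasDerivAt_le (k := 1) hs (fun r _ => hasDerivAt_expInt δ r)
    (fun r hr => exp_neg_mul_le_one hδ hr.1)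
  rw [expInt_zero_right] at this
  linarith

theorem expIntTwo_nonneg (δ : ℝ) {s : ℝ} (hs : 0 ≤ s) : 0 ≤ expIntTwo δ s :=
  intervalIntegral.integral_nonneg hs fun _ hr => expInt_nonneg δ hr.1

theorem expIntTwo_le (δ : ℝ) {s : ℝ} (hs : 0 ≤ s) : expIntTwo δ s ≤ s * expInt δ s := by
  have := sub_le_mul_sub_of_hasDerivAt_le (k := expInt δ s) hs
    (fun r _ => hasDerivAt_expIntTwo δ r) (fun r hr =>
      le_of_hasDerivAt_nonneg hr.2 (fun x _ => hasDerivAt_expInt δ x)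
        fun _ _ => (Real.exp_pos _).le)
  rw [expIntTwo_zero_right] at this
  linarith

end ExponentialIntegrals

/-! ### The characteristic function -/

section CharacteristicFunction

/-- The factor `1 / (1 - b e^{-κ h})` by which inverting the neutral operator
`φ ↦ φ - b φ(· - h)` multiplies `e^{κ t}`. -/
noncomputable def neutralGain (b h κ : ℝ) : ℝ := 1 / (1 - b * Real.exp (-(κ * h)))

/-- The characteristic function `χ₀` at the zero equilibrium, in terms of the delay `h = c τ`. -/
noncomputable def charFun (b c h z : ℝ) : ℝ := z ^ 2 - c * z + neutralGain b h z

variable {b c h κ : ℝ}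

theorem one_sub_mul_exp_pos (hb0 : 0 ≤ b) (hb1 : b < 1) (hh : 0 ≤ h) (hκ : 0 ≤ κ) :
    0 < 1 - b * Real.exp (-(κ * h)) := by
  linarith [mul_le_mul_of_nonneg_left (exp_neg_mul_le_one hκ hh) hb0]

theorem neutralGain_pos (hb0 : 0 ≤ b) (hb1 : b < 1) (hh : 0 ≤ h) (hκ : 0 ≤ κ) :
    0 < neutralGain b h κ :=
  one_div_pos.2 (one_sub_mul_exp_pos hb0 hb1 hh hκ)

theorem neutralGain_mul (hb0 : 0 ≤ b) (hb1 : b < 1) (hh : 0 ≤ h) (hκ : 0 ≤ κ) :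
    neutralGain b h κ * (1 - b * Real.exp (-(κ * h))) = 1 :=
  one_div_mul_cancel (one_sub_mul_exp_pos hb0 hb1 hh hκ).ne'

theorem hasDerivAt_charFun (hb0 : 0 ≤ b) (hb1 : b < 1) (hh : 0 ≤ h) (hκ : 0 ≤ κ) :
    HasDerivAt (charFun b c h)
      (2 * κ - c - b * Real.exp (-(κ * h)) * h * neutralGain b h κ ^ 2) κ := by
  have hexp : HasDerivAt (fun z => 1 - b * Real.exp (-(z * h)))
      (b * h * Real.exp (-(κ * h))) κ :=
    ((((hasDerivAt_id κ).mul_const h).neg.exp.const_mul b).const_sub 1).congr_deriv (by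
      simp only [Pi.neg_apply, id]; ring)
  have hgain : HasDerivAt (neutralGain b h)
      (-(b * h * Real.exp (-(κ * h))) * neutralGain b h κ ^ 2) κ := by
    have hinv := hexp.inv (one_sub_mul_exp_pos hb0 hb1 hh hκ).ne'
    refine (hinv.congr_of_eventuallyEq (.of_forall fun z => one_div _)).congr_deriv ?_
    rw [neutralGain, one_div, inv_pow, div_eq_mul_inv]
  exact ((((hasDerivAt_id κ).pow 2).sub ((hasDerivAt_id κ).const_mul c)).add hgain).congr_deriv
    (by simp only [id]; ring)

theorem continuousOn_charFun (hb0 : 0 ≤ b) (hb1 : b < 1) (hh : 0 ≤ h) :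
    ContinuousOn (charFun b c h) (Set.Ici 0) := fun _ hκ =>
  (hasDerivAt_charFun hb0 hb1 hh hκ).continuousAt.continuousWithinAt

theorem charFun_zero_pos (hb0 : 0 ≤ b) (hb1 : b < 1) (hh : 0 ≤ h) : 0 < charFun b c h 0 := by
  simpa only [charFun, ne_eq, OfNat.ofNat_ne_zero, not_false_eq_true, zero_pow, mul_zero, sub_zero,
    zero_add] using neutralGain_pos hb0 hb1 hh le_rfl

theorem charFun_pos_of_le (hb0 : 0 ≤ b) (hb1 : b < 1) (hh : 0 ≤ h) (hκ : 0 ≤ κ) (hc : c ≤ κ) :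
    0 < charFun b c h κ := by
  have := mul_nonneg hκ (sub_nonneg.2 hc)
  have := neutralGain_pos hb0 hb1 hh hκ
  rw [charFun]
  linarith

theorem charFun_pos_of_forall_ne (hb0 : 0 ≤ b) (hb1 : b < 1) (hh : 0 ≤ h) (hκ : 0 ≤ κ)
    (hne : ∀ z ≥ κ, charFun b c h z ≠ 0) : 0 < charFun b c h κ := by
  by_contra hcon
  have hle : κ ≤ max κ c := le_max_left κ c
  have hsub : Set.Icc κ (max κ c) ⊆ Set.Ici 0 := fun y hy => hκ.trans hy.1
  obtain ⟨y, hy, hy0⟩ := intermediate_value_Icc hle ((continuousOn_charFun hb0 hb1 hh).mono hsub)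
    ⟨not_lt.1 hcon, (charFun_pos_of_le hb0 hb1 hh (hκ.trans hle) (le_max_right κ c)).le⟩
  exact hne y hy.1 hy0

theorem exists_last_zero_charFun (hb0 : 0 ≤ b) (hb1 : b < 1) (hh : 0 ≤ h)
    (hz : ∃ z > 0, charFun b c h z = 0) :
    ∃ m > 0, charFun b c h m = 0 ∧ ∀ κ > m, 0 < charFun b c h κ := by
  set Z := Set.Icc 0 c ∩ charFun b c h ⁻¹' {0}
  have hmem : ∀ κ ≥ 0, charFun b c h κ = 0 → κ ∈ Z := fun κ hκ h0 =>
    ⟨⟨hκ, le_of_not_ge fun hcon => (charFun_pos_of_le hb0 hb1 hh hκ hcon).ne' h0⟩, h0⟩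
  have hZ : IsCompact Z := isCompact_Icc.of_isClosed_subset
    (((continuousOn_charFun hb0 hb1 hh).mono Set.Icc_subset_Ici_self).preimage_isClosed_of_isClosed
      isClosed_Icc isClosed_singleton) Set.inter_subset_left
  obtain ⟨z, hz0, hz⟩ := hz
  obtain ⟨m, hmZ, hmax⟩ := hZ.exists_isGreatest ⟨z, hmem z hz0.le hz⟩
  have hm : 0 < m := hz0.trans_le (hmax (hmem z hz0.le hz))
  refine ⟨m, hm, hmZ.2, fun κ hκ => charFun_pos_of_forall_ne hb0 hb1 hh (hm.trans hκ).le ?_⟩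
  intro y hy hy0
  have := hmax (hmem y (by linarith) hy0)
  linarith

theorem charFun_nonneg_of_unique_zero (hb0 : 0 ≤ b) (hb1 : b < 1) (hh : 0 ≤ h) {m : ℝ}
    (hzero : charFun b c h m = 0) (habove : ∀ κ > m, 0 < charFun b c h κ)
    (huniq : ∀ l > 0, charFun b c h l = 0 → l = m) (hκ : 0 ≤ κ) : 0 ≤ charFun b c h κ := by
  by_contra! hneg
  have hκm : κ < m := by
    by_contra! hmκ
    rcases hmκ.eq_or_lt with rfl | hlt
    · exact hneg.ne hzero
    · exact hneg.asymm (habove κ hlt)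
  obtain ⟨l, hl, hl0⟩ := intermediate_value_Icc' hκ
    ((continuousOn_charFun hb0 hb1 hh).mono fun y hy => hy.1)
    ⟨hneg.le, (charFun_zero_pos hb0 hb1 hh).le⟩
  have hlpos : 0 < l := hl.1.lt_of_ne fun h0 =>
    (charFun_zero_pos hb0 hb1 hh).ne' (by rwa [← h0] at hl0)
  linarith [huniq l hlpos hl0, hl.2]

end CharacteristicFunction

theorem mul_sq_le_one_sub_sq {q x : ℝ} (hx : 0 ≤ x) (hq0 : 0 ≤ q) (hq : q ≤ Real.exp (-x)) :
    q * x ^ 2 ≤ (1 - q) ^ 2 := by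
  set r := Real.exp (-(x / 2)) with hr
  have hr0 : 0 < r := Real.exp_pos _
  have hr1 : r ≤ 1 := Real.exp_le_one_iff.2 (by linarith)
  have hqr : q ≤ r ^ 2 := by
    rwa [hr, ← Real.exp_nat_mul, show ((2 : ℕ) : ℝ) * -(x / 2) = -x by push_cast; ring]
  have hsinh : x / 2 ≤ Real.sinh (x / 2) := Real.self_le_sinh_iff.2 (by linarith)
  have hrx : r * x ≤ 1 - r ^ 2 := by
    have hexp : r * Real.exp (x / 2) = 1 := by
      rw [hr, ← Real.exp_add, neg_add_cancel, Real.exp_zero]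
    rw [Real.sinh_eq] at hsinh
    nlinarith
  have hrx2 : (r * x) ^ 2 ≤ (1 - r ^ 2) ^ 2 := by gcongr
  -- `(1 - q)² / q` decreases in `q ≤ 1`; its value at `q = r²` dominates `x²`.
  have hanti : 0 ≤ (r ^ 2 - q) * (1 - r ^ 2 * q) :=
    mul_nonneg (by linarith) (by nlinarith [pow_le_one₀ (n := 2) hr0.le hr1])
  refine le_of_mul_le_mul_left ?_ (by positivity : 0 < r ^ 2)
  nlinarith

/-- A pair `lam ≤ lam + δ` of positive zeros of the characteristic function, counted with
multiplicity: the second condition is the vanishing of the divided difference of `charFun` at the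
two points, in a form that stays meaningful for a double zero `δ = 0`. -/
structure SpectralPair (b c h : ℝ) where
  /-- the smaller zero -/
  lam : ℝ
  /-- the distance between the zeros -/
  δ : ℝ
  b_nonneg : 0 ≤ b
  b_lt_one : b < 1
  h_pos : 0 < h
  lam_pos : 0 < lam
  δ_nonneg : 0 ≤ δ
  charFun_lam : charFun b c h lam = 0
  divided_difference : 2 * lam + δ - c =
    b * Real.exp (-(lam * h)) * neutralGain b h lam * neutralGain b h (lam + δ) * expInt δ h

namespace SpectralPair

variable {b c h : ℝ}

/-- The pair of two distinct zeros. -/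
noncomputable def ofDistinct {l m : ℝ} (hb0 : 0 ≤ b) (hb1 : b < 1) (hh : 0 < h) (hl : 0 < l)
    (hlm : l < m) (hzl : charFun b c h l = 0) (hzm : charFun b c h m = 0) : SpectralPair b c h where
  lam := l
  δ := m - l
  b_nonneg := hb0
  b_lt_one := hb1
  h_pos := hh
  lam_pos := hl
  δ_nonneg := sub_nonneg.2 hlm.le
  charFun_lam := hzl
  divided_difference := by
    have hsplit : Real.exp (-(l * h)) * Real.exp (-((m - l) * h)) = Real.exp (-(m * h)) := by
      rw [← Real.exp_add]; congr 1; ring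
    have hgl := neutralGain_mul hb0 hb1 hh.le hl.le
    have hgm := neutralGain_mul hb0 hb1 hh.le (hl.trans hlm).le
    have hint := mul_expInt (m - l) h
    rw [charFun] at hzl hzm
    refine mul_left_cancel₀ (sub_pos.2 hlm).ne' ?_
    rw [add_sub_cancel]
    linear_combination hzm - hzl
      - b * Real.exp (-(l * h)) * neutralGain b h l * neutralGain b h m * hint
      + neutralGain b h m * hgl - neutralGain b h l * hgm
      + b * neutralGain b h l * neutralGain b h m * hsplit

/-- The pair of coinciding zeros at a double zero. -/
noncomputable def ofDouble {m : ℝ} (hb0 : 0 ≤ b) (hb1 : b < 1) (hh : 0 < h) (hm : 0 < m)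
    (hzm : charFun b c h m = 0)
    (hderiv : 2 * m - c - b * Real.exp (-(m * h)) * h * neutralGain b h m ^ 2 = 0) :
    SpectralPair b c h where
  lam := m
  δ := 0
  b_nonneg := hb0
  b_lt_one := hb1
  h_pos := hh
  lam_pos := hm
  δ_nonneg := le_rfl
  charFun_lam := hzm
  divided_difference := by
    rw [expInt_zero_left, add_zero, add_zero]
    linear_combination hderiv

theorem exists_of_zero (hb0 : 0 ≤ b) (hb1 : b < 1) (hh : 0 < h)
    (hz : ∃ z > 0, charFun b c h z = 0) :
    ∃ S : SpectralPair b c h, ∀ κ > S.lam + S.δ, 0 < charFun b c h κ := by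
  obtain ⟨m, hm, hzm, habove⟩ := exists_last_zero_charFun hb0 hb1 hh.le hz
  by_cases hex : ∃ l > 0, charFun b c h l = 0 ∧ l ≠ m
  · obtain ⟨l, hl, hzl, hne⟩ := hex
    have hlm : l < m := hne.lt_or_gt.resolve_right fun hgt => (habove l hgt).ne' hzl
    exact ⟨ofDistinct hb0 hb1 hh hl hlm hzl hzm, fun κ hκ =>
      habove κ (by rwa [ofDistinct, add_sub_cancel] at hκ)⟩
  · push Not at hex
    have hmin : IsLocalMin (charFun b c h) m := by
      filter_upwards [lt_mem_nhds hm] with κ hκ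
      rw [hzm]
      exact charFun_nonneg_of_unique_zero hb0 hb1 hh.le hzm habove hex hκ.le
    have hderiv := hmin.hasDerivAt_eq_zero (hasDerivAt_charFun hb0 hb1 hh.le hm.le)
    exact ⟨ofDouble hb0 hb1 hh hm hzm hderiv, fun κ hκ =>
      habove κ (by rwa [ofDouble, add_zero] at hκ)⟩

variable (S : SpectralPair b c h)

/-- The weighted delay coefficient: multiplied by `e^{-lam t}`, the delayed term `b φ(t - h)`
becomes `q Y(t - h)` with `Y = e^{-lam ·} φ`. -/
noncomputable def q : ℝ := b * Real.exp (-(S.lam * h))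

/-- The neutral gain at the smaller zero. -/
noncomputable def e₁ : ℝ := neutralGain b h S.lam

/-- The neutral gain at the larger zero. -/
noncomputable def e₂ : ℝ := neutralGain b h (S.lam + S.δ)

/-- The damping coefficient of the weighted system. -/
noncomputable def D : ℝ := 2 * S.lam + S.δ - c

theorem q_nonneg : 0 ≤ S.q := mul_nonneg S.b_nonneg (Real.exp_pos _).le

theorem q_lt_one : S.q < 1 :=
  sub_pos.1 (one_sub_mul_exp_pos S.b_nonneg S.b_lt_one S.h_pos.le S.lam_pos.le)

theorem e₁_pos : 0 < S.e₁ := neutralGain_pos S.b_nonneg S.b_lt_one S.h_pos.le S.lam_pos.le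

theorem e₂_pos : 0 < S.e₂ :=
  neutralGain_pos S.b_nonneg S.b_lt_one S.h_pos.le (add_nonneg S.lam_pos.le S.δ_nonneg)

theorem e₁_mul : S.e₁ * (1 - S.q) = 1 :=
  neutralGain_mul S.b_nonneg S.b_lt_one S.h_pos.le S.lam_pos.le

theorem e₂_mul : S.e₂ * (1 - S.q * Real.exp (-(S.δ * h))) = 1 := by
  rw [q, mul_assoc b, ← Real.exp_add,
    show -(S.lam * h) + -(S.δ * h) = -((S.lam + S.δ) * h) by ring]
  exact neutralGain_mul S.b_nonneg S.b_lt_one S.h_pos.le (add_nonneg S.lam_pos.le S.δ_nonneg)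

theorem lam_mul : S.lam * (c - S.lam) = S.e₁ := by
  have := S.charFun_lam
  rw [charFun, ← e₁] at this
  linarith

theorem D_eq : S.D = S.q * S.e₁ * S.e₂ * expInt S.δ h := S.divided_difference

theorem D_nonneg : 0 ≤ S.D := by
  rw [S.D_eq]
  exact mul_nonneg (mul_nonneg (mul_nonneg S.q_nonneg S.e₁_pos.le) S.e₂_pos.le)
    (expInt_nonneg S.δ S.h_pos.le)

theorem e₁_sub : S.e₁ - S.D * S.δ = S.e₂ := by
  rw [S.D_eq]
  linear_combination (-S.e₁) * S.e₂_mul + S.e₂ * S.e₁_mul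
    - S.q * S.e₁ * S.e₂ * mul_expInt S.δ h

theorem e₂_le_e₁ : S.e₂ ≤ S.e₁ := by
  linarith [S.e₁_sub, mul_nonneg S.D_nonneg S.δ_nonneg]

theorem lam_mul_lam_add_δ : S.lam * (S.lam + S.δ) = S.e₁ + S.lam * S.D := by
  rw [D, ← S.lam_mul]; ring

/-- The norm of the map taking the past of `a` to the memory term of the weighted system. -/
noncomputable def feedback : ℝ :=
  S.q * S.e₁ ^ 2 * (expIntTwo S.δ h + S.q * S.e₂ * expInt S.δ h ^ 2)

theorem feedback_nonneg : 0 ≤ S.feedback := by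
  have := S.q_nonneg
  have := S.e₂_pos
  have := expIntTwo_nonneg S.δ S.h_pos.le
  unfold feedback
  positivity

/-- The dimensionless delay weight `q e₁ lam h`, which controls `feedback`. -/
noncomputable def θ : ℝ := S.q * S.e₁ * (S.lam * h)

theorem θ_nonneg : 0 ≤ S.θ :=
  mul_nonneg (mul_nonneg S.q_nonneg S.e₁_pos.le) (mul_pos S.lam_pos S.h_pos).le

theorem θ_lt_one : S.θ < 1 := by
  have hexp : S.q * (1 + S.lam * h) < 1 := by
    calc S.q * (1 + S.lam * h) ≤ S.q * Real.exp (S.lam * h) :=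
          mul_le_mul_of_nonneg_left (by linarith [Real.add_one_le_exp (S.lam * h)]) S.q_nonneg
      _ = b := by rw [q, mul_assoc, ← Real.exp_add, neg_add_cancel, Real.exp_zero, mul_one]
      _ < 1 := S.b_lt_one
  have := mul_lt_mul_of_pos_left hexp S.e₁_pos
  rw [θ]
  linarith [S.e₁_mul]

theorem θ_mul_le : S.θ * (S.lam * h) ≤ 1 - S.q := by
  have hq : S.q * (S.lam * h) ^ 2 ≤ (1 - S.q) ^ 2 :=
    mul_sq_le_one_sub_sq (mul_pos S.lam_pos S.h_pos).le S.q_nonneg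
      (mul_le_of_le_one_left (Real.exp_pos _).le S.b_lt_one.le)
  calc S.θ * (S.lam * h) = S.e₁ * (S.q * (S.lam * h) ^ 2) := by rw [θ]; ring
    _ ≤ S.e₁ * (1 - S.q) ^ 2 := mul_le_mul_of_nonneg_left hq S.e₁_pos.le
    _ = 1 - S.q := by linear_combination (1 - S.q) * S.e₁_mul

theorem θ_mul_add_lt : S.θ * (S.lam * h + S.θ - 2) < 1 - S.θ := by
  rcases S.q_nonneg.eq_or_lt with hq | hq
  · have : S.θ = 0 := by rw [θ, ← hq, zero_mul, zero_mul]
    rw [this]; norm_num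
  · have := mul_nonneg S.θ_nonneg (sub_nonneg.2 S.θ_lt_one.le)
    linarith [S.θ_mul_le]

theorem feedback_excess_lt :
    S.q * S.lam * S.e₂ * (S.lam * expIntTwo S.δ h + (S.θ - 2) * expInt S.δ h) < 1 - S.θ := by
  have hcoef : 0 ≤ S.q * S.lam * S.e₂ :=
    mul_nonneg (mul_nonneg S.q_nonneg S.lam_pos.le) S.e₂_pos.le
  have hbracket : S.lam * expIntTwo S.δ h + (S.θ - 2) * expInt S.δ h
      ≤ (S.lam * h + S.θ - 2) * expInt S.δ h := by
    linarith [mul_le_mul_of_nonneg_left (expIntTwo_le S.δ S.h_pos.le) S.lam_pos.le]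
  rcases le_total (S.lam * h + S.θ - 2) 0 with hneg | hpos
  · have := mul_nonpos_of_nonpos_of_nonneg hneg (expInt_nonneg S.δ S.h_pos.le)
    exact (mul_nonpos_of_nonneg_of_nonpos hcoef (hbracket.trans this)).trans_lt
      (sub_pos.2 S.θ_lt_one)
  · calc S.q * S.lam * S.e₂ * (S.lam * expIntTwo S.δ h + (S.θ - 2) * expInt S.δ h)
        ≤ S.q * S.lam * S.e₂ * ((S.lam * h + S.θ - 2) * h) :=
          mul_le_mul_of_nonneg_left (hbracket.trans
            (mul_le_mul_of_nonneg_left (expInt_le S.δ_nonneg S.h_pos.le) hpos)) hcoef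
      _ ≤ S.q * S.lam * S.e₁ * ((S.lam * h + S.θ - 2) * h) :=
          mul_le_mul_of_nonneg_right (mul_le_mul_of_nonneg_left S.e₂_le_e₁
            (mul_nonneg S.q_nonneg S.lam_pos.le)) (mul_nonneg hpos S.h_pos.le)
      _ = S.θ * (S.lam * h + S.θ - 2) := by rw [θ]; ring
      _ < 1 - S.θ := S.θ_mul_add_lt

theorem lam_mul_lam_add_δ_mul_feedback :
    S.lam * (S.lam + S.δ) * S.feedback = S.e₁ * (S.q * S.lam * S.e₂ *
      (S.lam * expIntTwo S.δ h + (S.θ - 2) * expInt S.δ h) + S.θ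
      + S.q * S.lam * S.e₂ * expInt S.δ h) := by
  have hgap : S.q * S.e₁ * S.e₂ * expInt S.δ h * S.δ = S.e₁ - S.e₂ := by
    rw [← S.D_eq, ← S.e₁_sub]; ring
  rw [feedback, θ]
  linear_combination (S.q * S.e₁ ^ 2 * S.lam
      + S.q ^ 2 * S.e₁ ^ 2 * S.e₂ * S.lam ^ 2 * expInt S.δ h) * mul_expIntTwo S.δ h
    + (S.q * S.e₁ * S.lam * expInt S.δ h - S.lam ^ 2 * S.q * S.e₁ * expIntTwo S.δ h) * hgap

theorem feedback_lt_one : S.feedback < 1 := by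
  have hpos : 0 < S.lam * (S.lam + S.δ) :=
    mul_pos S.lam_pos (add_pos_of_pos_of_nonneg S.lam_pos S.δ_nonneg)
  refine lt_of_mul_lt_mul_left ?_ hpos.le
  calc S.lam * (S.lam + S.δ) * S.feedback
      < S.e₁ * (1 + S.q * S.lam * S.e₂ * expInt S.δ h) := by
        rw [lam_mul_lam_add_δ_mul_feedback]
        exact mul_lt_mul_of_pos_left (by linarith [S.feedback_excess_lt]) S.e₁_pos
    _ = S.lam * (S.lam + S.δ) * 1 := by
        rw [mul_one, lam_mul_lam_add_δ, S.D_eq]; ring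

end SpectralPair

/-! ### Weighted systems: the limit at `-∞` -/

/-- The front equation in exponentially weighted form, `v = φ - b φ(· - h)`: `V = e^{-lam ·} v` is
the weighted neutral part, `Y = e^{-lam ·} φ` the weighted profile, `a = δ V - V'`, and
`M = e^{-lam ·} φ φ(· - h)` the weighted nonlinearity, which is arbitrary here so that
differences of two solutions are covered. -/
structure IsWeightedSystem {b c h : ℝ} (S : SpectralPair b c h) (V a Y M : ℝ → ℝ) : Prop where
  hasDerivAt_V : ∀ t, HasDerivAt V (S.δ * V t - a t) t
  hasDerivAt_a : ∀ t, HasDerivAt a (-S.D * a t + (Y t - S.e₂ * V t) - M t) t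
  neutral : ∀ t, Y t = V t + S.q * Y (t - h)
  continuous_Y : Continuous Y
  bound : ∃ C, ∀ t, |V t| ≤ C * Real.exp (-(S.lam * t)) ∧ |Y t| ≤ C * Real.exp (-(S.lam * t))

/-- A primitive of `D a - (Y - e₂ V)`. The additive constant is the one for which the neutral
relation expresses it through the past of `a` alone, see `IsWeightedSystem.abs_memoryTerm_le`. -/
noncomputable def memoryTerm {b c h : ℝ} (S : SpectralPair b c h) (V Y : ℝ → ℝ) (t : ℝ) : ℝ :=
  S.e₁ * (∫ r in (0 : ℝ)..t, V r) - (∫ r in (0 : ℝ)..t, Y r)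
    - S.q * S.e₁ * (∫ r in (0 : ℝ)..(-h), Y r) - S.D * V t

theorem memoryTerm_neg {b c h : ℝ} {S : SpectralPair b c h} {V Y : ℝ → ℝ} (t : ℝ) :
    memoryTerm S (fun r => -V r) (fun r => -Y r) t = -memoryTerm S V Y t := by
  simp only [memoryTerm, intervalIntegral.integral_neg]; ring

theorem hasDerivAt_integral_sub {F : ℝ → ℝ} (hF : Continuous F) (t r : ℝ) :
    HasDerivAt (fun r => ∫ x in (0 : ℝ)..(t - r), F x) (-F (t - r)) r :=
  ((hF.integral_hasStrictDerivAt 0 (t - r)).hasDerivAt.comp_const_sub t r)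

namespace IsWeightedSystem

variable {b c h : ℝ} {S : SpectralPair b c h} {V a Y M V₁ a₁ Y₁ M₁ : ℝ → ℝ}

theorem neg (W : IsWeightedSystem S V a Y M) :
    IsWeightedSystem S (fun t => -V t) (fun t => -a t) (fun t => -Y t) (fun t => -M t) where
  hasDerivAt_V t := (W.hasDerivAt_V t).neg.congr_deriv (by ring)
  hasDerivAt_a t := (W.hasDerivAt_a t).neg.congr_deriv (by ring)
  neutral t := by rw [W.neutral t]; ring
  continuous_Y := W.continuous_Y.neg
  bound := by simpa only [abs_neg] using W.bound

theorem sub (W : IsWeightedSystem S V a Y M) (W₁ : IsWeightedSystem S V₁ a₁ Y₁ M₁) :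
    IsWeightedSystem S (fun t => V t - V₁ t) (fun t => a t - a₁ t) (fun t => Y t - Y₁ t)
      (fun t => M t - M₁ t) where
  hasDerivAt_V t := ((W.hasDerivAt_V t).sub (W₁.hasDerivAt_V t)).congr_deriv (by ring)
  hasDerivAt_a t := ((W.hasDerivAt_a t).sub (W₁.hasDerivAt_a t)).congr_deriv (by ring)
  neutral t := by rw [W.neutral t, W₁.neutral t]; ring
  continuous_Y := W.continuous_Y.sub W₁.continuous_Y
  bound := by
    obtain ⟨C, hC⟩ := W.bound
    obtain ⟨C₁, hC₁⟩ := W₁.bound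
    refine ⟨C + C₁, fun t => ⟨(abs_sub _ _).trans ?_, (abs_sub _ _).trans ?_⟩⟩
    · linarith [(hC t).1, (hC₁ t).1]
    · linarith [(hC t).2, (hC₁ t).2]

theorem continuous_V (W : IsWeightedSystem S V a Y M) : Continuous V :=
  continuous_iff_continuousAt.2 fun t => (W.hasDerivAt_V t).continuousAt

theorem continuous_a (W : IsWeightedSystem S V a Y M) : Continuous a :=
  continuous_iff_continuousAt.2 fun t => (W.hasDerivAt_a t).continuousAt

theorem shiftDecay_V (W : IsWeightedSystem S V a Y M) : ShiftDecay S.q h V := by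
  obtain ⟨C, hC⟩ := W.bound
  exact ShiftDecay.of_exp_bound S.b_nonneg S.b_lt_one S.h_pos fun r => (hC r).1

theorem shiftDecay_Y (W : IsWeightedSystem S V a Y M) : ShiftDecay S.q h Y := by
  obtain ⟨C, hC⟩ := W.bound
  exact ShiftDecay.of_exp_bound S.b_nonneg S.b_lt_one S.h_pos fun r => (hC r).2

theorem shiftDecay_memoryTerm (W : IsWeightedSystem S V a Y M) :
    ShiftDecay S.q h (memoryTerm S V Y) := by
  obtain ⟨C, hC⟩ := W.bound
  have hV : ShiftDecay S.q h (fun t => ∫ r in (0 : ℝ)..t, V r) :=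
    ShiftDecay.of_linear_mul_exp_bound S.b_nonneg S.b_lt_one S.h_pos fun r hr =>
      abs_integral_le_of_exp_bound S.lam_pos.le (fun t => (hC t).1) hr
  have hY : ShiftDecay S.q h (fun t => ∫ r in (0 : ℝ)..t, Y r) :=
    ShiftDecay.of_linear_mul_exp_bound S.b_nonneg S.b_lt_one S.h_pos fun r hr =>
      abs_integral_le_of_exp_bound S.lam_pos.le (fun t => (hC t).2) hr
  exact (((hV.const_mul S.e₁).sub hY).sub
    (ShiftDecay.const S.q_nonneg S.q_lt_one _)).sub (W.shiftDecay_V.const_mul S.D)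

section PastBounds

variable {t β s : ℝ}

theorem V_sub_le (W : IsWeightedSystem S V a Y M) (hβ : ∀ r ≤ t, a r ≤ β) (hs : 0 ≤ s) :
    V (t - s) ≤ Real.exp (-(S.δ * s)) * V t + β * expInt S.δ s := by
  -- `f r = β expInt δ r - V (t - r)` satisfies `f' ≥ -δ f` and `f 0 = -V t`.
  have := exp_mul_le_of_le_hasDerivAt (k := -S.δ) hs
    (f := fun r => β * expInt S.δ r - V (t - r))
    (fun r _ => ((hasDerivAt_expInt S.δ r).const_mul β).sub
      ((W.hasDerivAt_V (t - r)).comp_const_sub t r))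
    (fun r hr => by
      have := mul_expInt S.δ r
      have := hβ (t - r) (by linarith [hr.1])
      linear_combination this - β * mul_expInt S.δ r)
  simp only [mul_zero, neg_zero, Real.exp_zero, expInt_zero_right, sub_zero, zero_sub, one_mul,
    neg_mul, neg_neg] at this
  have := mul_le_mul_of_nonneg_left this (Real.exp_pos (-(S.δ * s))).le
  rw [← mul_assoc, ← Real.exp_add, neg_add_cancel, Real.exp_zero] at this
  linarith

theorem integral_V_sub_le (W : IsWeightedSystem S V a Y M) (hβ : ∀ r ≤ t, a r ≤ β)
    (hs : 0 ≤ s) : (∫ r in (0 : ℝ)..t, V r) - (∫ r in (0 : ℝ)..(t - s), V r)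
      ≤ expInt S.δ s * V t + β * expIntTwo S.δ s := by
  have := le_of_hasDerivAt_nonneg hs
    (f := fun r => expInt S.δ r * V t + β * expIntTwo S.δ r + ∫ x in (0 : ℝ)..(t - r), V x)
    (fun r _ => (((hasDerivAt_expInt S.δ r).mul_const (V t)).add
      ((hasDerivAt_expIntTwo S.δ r).const_mul β)).add
        (hasDerivAt_integral_sub W.continuous_V t r))
    fun r hr => by linarith [W.V_sub_le hβ hr.1]
  simp only [expInt_zero_right, expIntTwo_zero_right, sub_zero, zero_mul, mul_zero,
    zero_add] at this
  linarith

theorem gap_le (W : IsWeightedSystem S V a Y M) (hβ : ∀ r ≤ t, a r ≤ β) :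
    Y t - S.e₂ * V t ≤ β * S.D := by
  have hle := (W.shiftDecay_Y.sub (W.shiftDecay_V.const_mul S.e₂)).le_div S.q_nonneg S.q_lt_one
    S.h_pos.le (s := S.q * S.e₂ * (β * expInt S.δ h)) (t := t) fun r hr => by
      have hV := mul_le_mul_of_nonneg_left
        (W.V_sub_le (fun x hx => hβ x (hx.trans hr)) S.h_pos.le)
        (mul_nonneg S.q_nonneg S.e₂_pos.le)
      rw [W.neutral r]
      linear_combination hV - V r * S.e₂_mul
  refine hle.trans_eq ?_
  rw [div_eq_iff (sub_pos.2 S.q_lt_one).ne', S.D_eq]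
  linear_combination (-(S.q * S.e₂ * β * expInt S.δ h)) * S.e₁_mul

theorem integral_Y_sub (W : IsWeightedSystem S V a Y M) (t : ℝ) :
    (∫ r in (0 : ℝ)..t, Y r) - (∫ r in (0 : ℝ)..t, V r) - S.q * (∫ r in (0 : ℝ)..(t - h), Y r)
      = -(S.q * ∫ r in (0 : ℝ)..(-h), Y r) := by
  have := eq_of_hasDerivAt_zero (f := fun t => (∫ r in (0 : ℝ)..t, Y r)
      - (∫ r in (0 : ℝ)..t, V r) - S.q * (∫ r in (0 : ℝ)..(t - h), Y r)) (fun t =>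
    ((((W.continuous_Y.integral_hasStrictDerivAt 0 t).hasDerivAt).sub
      ((W.continuous_V.integral_hasStrictDerivAt 0 t).hasDerivAt)).sub
      (((W.continuous_Y.integral_hasStrictDerivAt 0 (t - h)).hasDerivAt.comp_sub_const
        t h).const_mul S.q)).congr_deriv (by rw [W.neutral t]; ring)) t 0
  simpa only [intervalIntegral.integral_same, zero_sub, neg_zero, sub_self] using this

theorem hasDerivAt_memoryTerm (W : IsWeightedSystem S V a Y M) (t : ℝ) :
    HasDerivAt (memoryTerm S V Y) (S.D * a t - (Y t - S.e₂ * V t)) t := by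
  refine HasDerivAt.congr_deriv
    (((((W.continuous_V.integral_hasStrictDerivAt 0 t).hasDerivAt.const_mul S.e₁).sub
      (W.continuous_Y.integral_hasStrictDerivAt 0 t).hasDerivAt).sub_const
      (S.q * S.e₁ * ∫ r in (0 : ℝ)..(-h), Y r)).sub ((W.hasDerivAt_V t).const_mul S.D)) ?_
  linear_combination V t * S.e₁_sub

theorem hasDerivAt_add_memoryTerm (W : IsWeightedSystem S V a Y M) (t : ℝ) :
    HasDerivAt (fun t => a t + memoryTerm S V Y t) (-M t) t :=
  ((W.hasDerivAt_a t).add (W.hasDerivAt_memoryTerm t)).congr_deriv (by ring)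

theorem memoryTerm_le_add (W : IsWeightedSystem S V a Y M) (hβ : ∀ r ≤ t, a r ≤ β) :
    memoryTerm S V Y t ≤ S.q * memoryTerm S V Y (t - h) + S.feedback * β * (1 - S.q) := by
  have hint := mul_le_mul_of_nonneg_left (W.integral_V_sub_le hβ S.h_pos.le)
    (mul_nonneg S.q_nonneg S.e₁_pos.le)
  have hV := mul_le_mul_of_nonneg_left (W.V_sub_le hβ S.h_pos.le)
    (mul_nonneg S.q_nonneg S.D_nonneg)
  have hD : S.D * (1 - S.q * Real.exp (-(S.δ * h))) = S.q * S.e₁ * expInt S.δ h := by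
    rw [S.D_eq]; linear_combination (S.q * S.e₁ * expInt S.δ h) * S.e₂_mul
  have hfeedback : S.feedback * (1 - S.q) =
      S.q * S.e₁ * expIntTwo S.δ h + S.q * S.D * expInt S.δ h := by
    rw [SpectralPair.feedback, S.D_eq]
    linear_combination
      (S.q * S.e₁ * (expIntTwo S.δ h + S.q * S.e₂ * expInt S.δ h ^ 2)) * S.e₁_mul
  simp only [memoryTerm]
  linear_combination hint + hV - W.integral_Y_sub t - V t * hD - β * hfeedback
    + ((∫ x in (0 : ℝ)..t, V x) - S.q * ∫ r in (0 : ℝ)..(-h), Y r) * S.e₁_mul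

theorem memoryTerm_le (W : IsWeightedSystem S V a Y M) (hβ : ∀ r ≤ t, a r ≤ β) :
    memoryTerm S V Y t ≤ S.feedback * β := by
  have hle := W.shiftDecay_memoryTerm.le_div S.q_nonneg S.q_lt_one S.h_pos.le
    fun r hr => W.memoryTerm_le_add fun x hx => hβ x (hx.trans hr)
  rwa [mul_div_cancel_right₀ _ (sub_pos.2 S.q_lt_one).ne'] at hle

theorem le_memoryTerm (W : IsWeightedSystem S V a Y M) (hβ : ∀ r ≤ t, β ≤ a r) :
    S.feedback * β ≤ memoryTerm S V Y t := by
  have := W.neg.memoryTerm_le (t := t) (β := -β) fun r hr => neg_le_neg (hβ r hr)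
  rw [memoryTerm_neg] at this
  linarith

theorem abs_memoryTerm_le (W : IsWeightedSystem S V a Y M) (hβ : ∀ r ≤ t, |a r| ≤ β) :
    |memoryTerm S V Y t| ≤ S.feedback * β := by
  have hlow := W.le_memoryTerm fun r hr => (abs_le.1 (hβ r hr)).1
  exact abs_le.2 ⟨by linarith, W.memoryTerm_le fun r hr => (abs_le.1 (hβ r hr)).2⟩

end PastBounds

section LimitAtBot

theorem abs_a_sub_le (W : IsWeightedSystem S V a Y M) {t K x₀ η : ℝ} (hK : ∀ r ≤ t, |a r| ≤ K)
    (hX : ∀ r ≤ t, |a r + memoryTerm S V Y r - x₀| ≤ η) :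
    ∀ r ≤ t, |a r - x₀ / (1 + S.feedback)| ≤ η / (1 - S.feedback) := by
  set A := x₀ / (1 + S.feedback)
  have hA : A * (1 + S.feedback) = x₀ := div_mul_cancel₀ _ (by linarith [S.feedback_nonneg])
  set Z := (fun r => |a r - A|) '' Set.Iic t
  have hZ : BddAbove Z := ⟨K + |A|, by
    rintro _ ⟨r, hr, rfl⟩
    exact (abs_sub _ _).trans (by linarith [hK r hr])⟩
  have hle : ∀ r ≤ t, |a r - A| ≤ sSup Z := fun r hr => le_csSup hZ ⟨r, hr, rfl⟩
  have hcontract : ∀ r ≤ t, |a r - A| ≤ η + S.feedback * sSup Z := fun r hr => by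
    have hup := W.memoryTerm_le (t := r) (β := A + sSup Z) fun s hs => by
      linarith [(abs_le.1 (hle s (hs.trans hr))).2]
    have hlow := W.le_memoryTerm (t := r) (β := A - sSup Z) fun s hs => by
      linarith [(abs_le.1 (hle s (hs.trans hr))).1]
    have hXr := abs_le.1 (hX r hr)
    exact abs_le.2 ⟨by linarith [hXr.1], by linarith [hXr.2]⟩
  have hsup : sSup Z ≤ η + S.feedback * sSup Z :=
    csSup_le ⟨_, ⟨t, Set.self_mem_Iic, rfl⟩⟩ (by rintro _ ⟨r, hr, rfl⟩; exact hcontract r hr)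
  refine fun r hr => (hle r hr).trans ?_
  rw [le_div_iff₀ (sub_pos.2 S.feedback_lt_one)]
  linarith

theorem tendsto_a_of_tendsto (W : IsWeightedSystem S V a Y M) {K x₀ : ℝ} (hK : ∀ r, |a r| ≤ K)
    (hX : Tendsto (fun t => a t + memoryTerm S V Y t) atBot (nhds x₀)) :
    Tendsto a atBot (nhds (x₀ / (1 + S.feedback))) := by
  have hσ := sub_pos.2 S.feedback_lt_one
  rw [Metric.tendsto_nhds] at hX ⊢
  intro ε hε
  obtain ⟨T, hT⟩ := eventually_atBot.1
    (hX (ε / 2 * (1 - S.feedback)) (mul_pos (half_pos hε) hσ))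
  refine eventually_atBot.2 ⟨T, fun t ht => ?_⟩
  have := W.abs_a_sub_le (fun r _ => hK r) (fun r hr => (hT r hr).le) t ht
  rw [mul_div_cancel_right₀ _ hσ.ne'] at this
  exact this.trans_lt (half_lt_self hε)

theorem antitone_add_memoryTerm (W : IsWeightedSystem S V a Y M) (hM : ∀ t, 0 ≤ M t) :
    Antitone fun t => a t + memoryTerm S V Y t :=
  antitone_of_hasDerivAt_nonpos W.hasDerivAt_add_memoryTerm fun t => neg_nonpos.2 (hM t)

theorem memoryTerm_nonneg (W : IsWeightedSystem S V a Y M) (ha : ∀ t, 0 ≤ a t) (t : ℝ) :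
    0 ≤ memoryTerm S V Y t := by
  simpa only [mul_zero] using W.le_memoryTerm (t := t) fun r _ => ha r

theorem add_memoryTerm_le (W : IsWeightedSystem S V a Y M) {K x : ℝ} (hx : 0 < x)
    (ha : ∀ t, 0 ≤ a t) (hV : ∀ t, 0 ≤ V t) (hK : 0 ≤ K)
    (hM : ∀ t, M t ≤ (K * Real.exp (x * t)) ^ 2 * V t) {t : ℝ} (ht : t ≤ 0) :
    a t + memoryTerm S V Y t ≤ Real.exp (K / x) * (a 0 + memoryTerm S V Y 0 + K * V 0) := by
  -- With `p = K e^{x t}`, `N = (a + memoryTerm) + p V` satisfies `N' ≥ -p N`.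
  set X := fun t => a t + memoryTerm S V Y t
  set p := fun t => K * Real.exp (x * t) with hp
  have hp0 : ∀ t, 0 ≤ p t := fun t => mul_nonneg hK (Real.exp_pos _).le
  have hp' : ∀ t, HasDerivAt p (x * p t) t := fun t =>
    (((hasDerivAt_id t).const_mul x).exp.const_mul K).congr_deriv (by simp only [hp, id]; ring)
  have hexp : ∀ t, HasDerivAt (fun t => Real.exp (p t / x)) (Real.exp (p t / x) * p t) t := fun t =>
    ((hp' t).div_const x).exp.congr_deriv (by rw [mul_div_cancel_left₀ _ hx.ne'])
  have haX : ∀ t, a t ≤ X t := fun t => le_add_of_nonneg_right (W.memoryTerm_nonneg ha t)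
  have hmono := le_of_hasDerivAt_nonneg ht (f := fun t => Real.exp (p t / x) * (X t + p t * V t))
    (fun r _ => (hexp r).mul ((W.hasDerivAt_add_memoryTerm r).add ((hp' r).mul (W.hasDerivAt_V r))))
    (fun r _ => by
      have hgrow : 0 ≤ (x * p r + p r * S.δ + 0) * V r :=
        mul_nonneg (by have := hp0 r; have := S.δ_nonneg; positivity) (hV r)
      have hXr := mul_nonneg (hp0 r) (sub_nonneg.2 (haX r))
      have hMr : M r ≤ p r ^ 2 * V r := hM r
      have := mul_nonneg (Real.exp_pos (p r / x)).le
        (by linarith : 0 ≤ p r * (X r + p r * V r) + (-M r + (x * p r * V r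
          + p r * (S.δ * V r - a r))))
      linarith)
  have hpt : p 0 = K := by simp only [hp, mul_zero, Real.exp_zero, mul_one]
  simp only [hpt] at hmono
  have hXt : 0 ≤ X t := (ha t).trans (haX t)
  calc X t ≤ 1 * (X t + p t * V t) := by linarith [mul_nonneg (hp0 t) (hV t)]
    _ ≤ Real.exp (p t / x) * (X t + p t * V t) :=
      mul_le_mul_of_nonneg_right (Real.one_le_exp (div_nonneg (hp0 t) hx.le))
        (add_nonneg hXt (mul_nonneg (hp0 t) (hV t)))
    _ ≤ _ := hmono

theorem exists_add_memoryTerm_le (W : IsWeightedSystem S V a Y M) {C x : ℝ} (hx : 0 < x)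
    (ha : ∀ t, 0 ≤ a t) (hV : ∀ t, 0 ≤ V t) (hM0 : ∀ t, 0 ≤ M t)
    (hM : ∀ t, M t ≤ C * Real.exp (x * t) * V t) :
    ∃ L, ∀ t, a t + memoryTerm S V Y t ≤ L := by
  have hsq : ∀ t, M t ≤ (√|C| * Real.exp (x / 2 * t)) ^ 2 * V t := fun t => by
    rw [mul_pow, Real.sq_sqrt (abs_nonneg C), ← Real.exp_nat_mul,
      show ((2 : ℕ) : ℝ) * (x / 2 * t) = x * t by push_cast; ring]
    refine (hM t).trans ?_
    gcongr
    exacts [hV t, le_abs_self C]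
  have hpast := fun (t : ℝ) (ht : t ≤ 0) =>
    W.add_memoryTerm_le (half_pos hx) ha hV (Real.sqrt_nonneg |C|) hsq ht
  refine ⟨Real.exp (√|C| / (x / 2)) * (a 0 + memoryTerm S V Y 0 + √|C| * V 0), fun t => ?_⟩
  rcases le_total t 0 with ht | ht
  · exact hpast t ht
  · exact (W.antitone_add_memoryTerm hM0 ht).trans (hpast 0 le_rfl)

theorem exists_tendsto_a_pos (W : IsWeightedSystem S V a Y M) {C x : ℝ} (hx : 0 < x)
    (ha : ∀ t, 0 ≤ a t) (hV : ∀ t, 0 ≤ V t) (hM0 : ∀ t, 0 < M t)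
    (hM : ∀ t, M t ≤ C * Real.exp (x * t) * V t) :
    ∃ A > 0, Tendsto a atBot (nhds A) := by
  set X := fun t => a t + memoryTerm S V Y t
  obtain ⟨L, hL⟩ := W.exists_add_memoryTerm_le hx ha hV (fun t => (hM0 t).le) hM
  have hbdd : BddAbove (Set.range X) := ⟨L, by rintro _ ⟨t, rfl⟩; exact hL t⟩
  have hanti : Antitone X := W.antitone_add_memoryTerm fun t => (hM0 t).le
  have haX : ∀ t, a t ≤ X t := fun t => le_add_of_nonneg_right (W.memoryTerm_nonneg ha t)
  have hstrict : X 0 < X (-1) := by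
    refine strictAnti_of_hasDerivAt_neg W.hasDerivAt_add_memoryTerm
      (fun t => neg_neg_of_pos (hM0 t)) (by norm_num)
  refine ⟨_, div_pos (((ha 0).trans (haX 0)).trans_lt
      (hstrict.trans_le (le_ciSup hbdd (-1)))) (by linarith [S.feedback_nonneg]),
    W.tendsto_a_of_tendsto (K := L) (fun r => ?_) (tendsto_atBot_ciSup hanti hbdd)⟩
  rw [abs_of_nonneg (ha r)]
  exact (haX r).trans (hL r)

theorem exists_V_le (W : IsWeightedSystem S V a Y M) {C x : ℝ} (hx : 0 < x)
    (ha : ∀ t, 0 ≤ a t) (hV : ∀ t, 0 ≤ V t) (hM0 : ∀ t, 0 ≤ M t)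
    (hM : ∀ t, M t ≤ C * Real.exp (x * t) * V t) :
    ∃ K, ∀ t ≤ 0, V t ≤ K * (1 + |t|) := by
  obtain ⟨L, hL⟩ := W.exists_add_memoryTerm_le hx ha hV hM0 hM
  have haL : ∀ t, a t ≤ L := fun t =>
    (le_add_of_nonneg_right (W.memoryTerm_nonneg ha t)).trans (hL t)
  refine ⟨V 0 + L, fun t ht => ?_⟩
  have := mul_sub_le_sub_of_le_hasDerivAt (k := -L) ht (fun r _ => W.hasDerivAt_V r)
    fun r _ => by linarith [haL r, mul_nonneg S.δ_nonneg (hV r)]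
  have hVt := mul_nonneg (hV 0) (abs_nonneg t)
  have hL0 : 0 ≤ L := (ha 0).trans (haL 0)
  rw [abs_of_nonpos ht] at hVt ⊢
  linarith

end LimitAtBot

end IsWeightedSystem

/-! ### Weighted systems: exponential decay at `-∞` -/

/-- `F` is bounded by `K e^{p ·}` on `(-∞, T]`. -/
def HasExpBound (F : ℝ → ℝ) (K p T : ℝ) : Prop := ∀ r ≤ T, |F r| ≤ K * Real.exp (p * r)

theorem tendsto_mul_exp_atBot (K : ℝ) {p : ℝ} (hp : 0 < p) :
    Tendsto (fun r => K * Real.exp (p * r)) atBot (nhds 0) := by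
  simpa only [mul_zero, Function.comp_def, id] using
    (Real.tendsto_exp_atBot.comp (tendsto_id.const_mul_atBot hp)).const_mul K

theorem hasDerivAt_div_mul_exp (K : ℝ) {p : ℝ} (hp : p ≠ 0) (r : ℝ) :
    HasDerivAt (fun r => K / p * Real.exp (p * r)) (K * Real.exp (p * r)) r :=
  (((hasDerivAt_id r).const_mul p).exp.const_mul (K / p)).congr_deriv (by
    simp only [id]; field_simp)

namespace HasExpBound

variable {F F' : ℝ → ℝ} {K p T k : ℝ}

theorem nonneg (hF : HasExpBound F K p T) : 0 ≤ K :=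
  nonneg_of_mul_nonneg_left ((abs_nonneg _).trans (hF T le_rfl)) (Real.exp_pos _)

theorem neg (hF : HasExpBound F K p T) : HasExpBound (fun r => -F r) K p T := fun r hr => by
  rw [abs_neg]; exact hF r hr

theorem sub (hF : HasExpBound F K p T) {K' : ℝ} (hF' : HasExpBound F' K' p T) :
    HasExpBound (fun r => F r - F' r) (K + K') p T := fun r hr =>
  (abs_sub _ _).trans ((add_le_add (hF r hr) (hF' r hr)).trans_eq (add_mul _ _ _).symm)

theorem mono (hF : HasExpBound F K p T) {T' : ℝ} (hT : T' ≤ T) : HasExpBound F K p T' :=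
  fun r hr => hF r (hr.trans hT)

theorem of_rate_le (hF : HasExpBound F K p T) (hT : T ≤ 0) {p' : ℝ} (hp : p' ≤ p) :
    HasExpBound F K p' T := fun r hr => by
  have := mul_le_mul_of_nonpos_right hp (hr.trans hT)
  have := hF.nonneg
  exact (hF r hr).trans (by gcongr)

theorem le_of_le (hF : HasExpBound F K p T) (hp : 0 ≤ p) {t r : ℝ} (ht : t ≤ T) (hr : r ≤ t) :
    |F r| ≤ K * Real.exp (p * t) := by
  have := hF.nonneg
  exact (hF r (hr.trans ht)).trans (by gcongr)

theorem exp_neg_mul (hF : HasExpBound F K p T) (k : ℝ) :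
    HasExpBound (fun r => Real.exp (-(k * r)) * F r) K (p - k) T := fun r hr => by
  rw [abs_mul, abs_of_pos (Real.exp_pos _)]
  refine (mul_le_mul_of_nonneg_left (hF r hr) (Real.exp_pos _).le).trans_eq ?_
  rw [mul_left_comm, ← Real.exp_add]; congr 2; ring

theorem of_exp_neg_mul (hF : HasExpBound (fun r => Real.exp (-(k * r)) * F r) K (p - k) T) :
    HasExpBound F K p T := by
  have := hF.exp_neg_mul (-k)
  simpa only [← mul_assoc, ← Real.exp_add, neg_mul, neg_neg, add_neg_cancel, Real.exp_zero,
    one_mul, sub_neg_eq_add, sub_add_cancel] using this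

theorem tendsto_of_sub {L : ℝ} (hF : HasExpBound (fun r => F r - L) K p T) (hp : 0 < p) :
    Tendsto F atBot (nhds L) := by
  rw [tendsto_iff_norm_sub_tendsto_zero]
  refine squeeze_zero' (.of_forall fun _ => norm_nonneg _) ?_ (tendsto_mul_exp_atBot K hp)
  filter_upwards [eventually_le_atBot T] with r hr
  exact hF r hr

theorem exists_limit (hF' : HasExpBound F' K p T) (hp : 0 < p)
    (hF : ∀ r, HasDerivAt F (F' r) r) :
    ∃ L, HasExpBound (fun r => F r - L) (K / p) p T := by
  set E := fun r => K / p * Real.exp (p * r)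
  have hE0 : ∀ r, 0 ≤ E r := fun r =>
    mul_nonneg (div_nonneg hF'.nonneg hp.le) (Real.exp_pos _).le
  have hE' := hasDerivAt_div_mul_exp K hp.ne'
  have hupper : ∀ r s, r ≤ s → s ≤ T → F r + E r ≤ F s + E s := fun r s hrs hs =>
    le_of_hasDerivAt_nonneg hrs (fun x _ => (hF x).add (hE' x))
      fun x hx => by linarith [(abs_le.1 (hF' x (hx.2.trans hs))).1]
  have hlower : ∀ r s, r ≤ s → s ≤ T → E r - F r ≤ E s - F s := fun r s hrs hs =>
    le_of_hasDerivAt_nonneg hrs (fun x _ => (hE' x).sub (hF x))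
      fun x hx => by linarith [(abs_le.1 (hF' x (hx.2.trans hs))).2]
  have hcross : ∀ r ≤ T, ∀ s ≤ T, F r - E r ≤ F s + E s := fun r hr s hs => by
    rcases le_total r s with hrs | hsr
    · linarith [hupper r s hrs hs, hE0 r]
    · linarith [hlower s r hsr hr, hE0 s]
  set Z := (fun r => F r + E r) '' Set.Iic T
  have hZne : Z.Nonempty := ⟨_, ⟨T, Set.self_mem_Iic, rfl⟩⟩
  have hZ : BddBelow Z := ⟨F T - E T, by rintro _ ⟨s, hs, rfl⟩; exact hcross T le_rfl s hs⟩
  refine ⟨sInf Z, fun r hr => ?_⟩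
  have hle : sInf Z ≤ F r + E r := csInf_le hZ ⟨r, hr, rfl⟩
  have hge : F r - E r ≤ sInf Z :=
    le_csInf hZne (by rintro _ ⟨s, hs, rfl⟩; exact hcross r hr s hs)
  exact abs_le.2 ⟨by linarith, by linarith⟩

theorem of_deriv (hF' : HasExpBound F' K p T) (hp : 0 < p) (hF : ∀ r, HasDerivAt F (F' r) r)
    (hlim : Tendsto F atBot (nhds 0)) : HasExpBound F (K / p) p T := by
  obtain ⟨L, hL⟩ := hF'.exists_limit hp hF
  obtain rfl : L = 0 := tendsto_nhds_unique (hL.tendsto_of_sub hp) hlim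
  simpa only [sub_zero] using hL

theorem of_le_mul_add_shift {M Y : ℝ → ℝ} {C x h : ℝ} (hC : 0 ≤ C) (hh : 0 ≤ h)
    (hM : ∀ r ≤ T, |M r| ≤ C * Real.exp (x * r) * (|Y r| + |Y (r - h)|))
    (hY : HasExpBound Y K p T) :
    HasExpBound M (C * (K * (1 + Real.exp (-(p * h))))) (p + x) T := fun r hr => by
  refine (hM r hr).trans ((mul_le_mul_of_nonneg_left
    (add_le_add (hY r hr) (hY (r - h) (by linarith))) (by positivity)).trans_eq ?_)
  rw [show p * (r - h) = p * r + -(p * h) by ring, add_mul p x r, Real.exp_add, Real.exp_add]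
  ring

end HasExpBound

namespace IsWeightedSystem

variable {b c h : ℝ} {S : SpectralPair b c h} {V a Y M : ℝ → ℝ}

section Bootstrap

variable {C K x p T : ℝ}

theorem hasExpBound_Y (W : IsWeightedSystem S V a Y M) (hp : 0 ≤ p)
    (hV : HasExpBound V K p T) : HasExpBound Y (K / (1 - S.q)) p T := fun t ht => by
  have hVt : ∀ r ≤ t, |V r| ≤ K * Real.exp (p * t) := fun r hr => hV.le_of_le hp ht hr
  have hup := W.shiftDecay_Y.le_div S.q_nonneg S.q_lt_one S.h_pos.le (t := t) fun r hr => by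
    rw [W.neutral r, add_comm]
    exact add_le_add_right (abs_le.1 (hVt r hr)).2 _
  have hlow := W.neg.shiftDecay_Y.le_div S.q_nonneg S.q_lt_one S.h_pos.le
    (s := K * Real.exp (p * t)) (t := t) fun r hr => by
      rw [W.neutral r]; linarith [(abs_le.1 (hVt r hr)).1]
  rw [mul_div_right_comm] at hup hlow
  exact abs_le.2 ⟨by linarith, hup⟩

theorem tendsto_memoryTerm (W : IsWeightedSystem S V a Y M) (ha0 : Tendsto a atBot (nhds 0)) :
    Tendsto (memoryTerm S V Y) atBot (nhds 0) := by
  rw [Metric.tendsto_nhds] at ha0 ⊢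
  intro ε hε
  obtain ⟨N, hN⟩ := eventually_atBot.1 (ha0 ε hε)
  refine eventually_atBot.2 ⟨N, fun t ht => ?_⟩
  simp only [Real.dist_eq, sub_zero] at hN ⊢
  exact (W.abs_memoryTerm_le fun r hr => (hN r (hr.trans ht)).le).trans_lt
    (mul_lt_of_lt_one_left hε S.feedback_lt_one)

theorem hasExpBound_a_of_M (W : IsWeightedSystem S V a Y M) (hp : 0 < p)
    (ha0 : Tendsto a atBot (nhds 0)) (ha1 : ∀ r ≤ T, |a r| ≤ 1) (hM : HasExpBound M K p T) :
    HasExpBound a (K / p / (1 - S.feedback)) p T := fun t ht => by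
  have hX : HasExpBound (fun t => a t + memoryTerm S V Y t) (K / p) p T :=
    hM.neg.of_deriv hp W.hasDerivAt_add_memoryTerm
      (by simpa only [add_zero] using ha0.add (W.tendsto_memoryTerm ha0))
  have := W.abs_a_sub_le (t := t) (x₀ := 0) (η := K / p * Real.exp (p * t))
    (fun r hr => ha1 r (hr.trans ht))
    (fun r hr => by rw [sub_zero]; exact hX.le_of_le hp.le ht hr) t le_rfl
  rwa [zero_div, sub_zero, mul_div_right_comm] at this

theorem hasDerivAt_exp_neg_mul_V (W : IsWeightedSystem S V a Y M) (r : ℝ) :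
    HasDerivAt (fun r => Real.exp (-(S.δ * r)) * V r) (-(Real.exp (-(S.δ * r)) * a r)) r :=
  (hasDerivAt_exp_neg_mul S.δ (W.hasDerivAt_V r)).congr_deriv (by ring)

theorem V_le_of_hasExpBound_a (W : IsWeightedSystem S V a Y M) (hp : p < S.δ)
    (ha : HasExpBound a K p T) {r : ℝ} (hr : r ≤ T) :
    V r ≤ (Real.exp (-(p * T)) * |V T| + K / (S.δ - p)) * Real.exp (p * r) := by
  have hbound := ha.exp_neg_mul S.δ
  have hmono := le_of_hasDerivAt_nonneg hr
    (fun x _ => (W.hasDerivAt_exp_neg_mul_V x).add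
      (hasDerivAt_div_mul_exp K (sub_neg.2 hp).ne x))
    (fun x hx => by linarith [(abs_le.1 (hbound x hx.2)).2])
  have hlast : 0 ≤ K / (S.δ - p) * Real.exp ((p - S.δ) * T) :=
    mul_nonneg (div_nonneg ha.nonneg (sub_pos.2 hp).le) (Real.exp_pos _).le
  have hVT := mul_le_mul_of_nonneg_left (le_abs_self (V T)) (Real.exp_pos (-(S.δ * T))).le
  have hweighted : Real.exp (-(S.δ * r)) * V r
      ≤ Real.exp (-(S.δ * T)) * |V T| + K / (S.δ - p) * Real.exp ((p - S.δ) * r) := by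
    have hsign : K / (p - S.δ) = -(K / (S.δ - p)) := by rw [← neg_sub S.δ p, div_neg]
    simp only [Pi.add_apply, hsign] at hmono
    linarith
  calc V r = Real.exp (S.δ * r) * (Real.exp (-(S.δ * r)) * V r) := by
        rw [← mul_assoc, ← Real.exp_add, add_neg_cancel, Real.exp_zero, one_mul]
    _ ≤ Real.exp (S.δ * r) * (Real.exp (-(S.δ * T)) * |V T|
          + K / (S.δ - p) * Real.exp ((p - S.δ) * r)) :=
        mul_le_mul_of_nonneg_left hweighted (Real.exp_pos _).le
    _ = Real.exp (S.δ * r + -(S.δ * T)) * |V T| + K / (S.δ - p) * Real.exp (p * r) := by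
        rw [Real.exp_add, show p * r = S.δ * r + (p - S.δ) * r by ring, Real.exp_add (S.δ * r)]
        ring
    _ ≤ Real.exp (-(p * T) + p * r) * |V T| + K / (S.δ - p) * Real.exp (p * r) := by
        have : Real.exp (S.δ * r + -(S.δ * T)) ≤ Real.exp (-(p * T) + p * r) :=
          Real.exp_le_exp.2 (by linarith [mul_nonneg (sub_pos.2 hp).le (sub_nonneg.2 hr)])
        gcongr
    _ = _ := by rw [Real.exp_add]; ring

theorem hasExpBound_V (W : IsWeightedSystem S V a Y M) (hp : p < S.δ)
    (ha : HasExpBound a K p T) :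
    HasExpBound V (Real.exp (-(p * T)) * |V T| + K / (S.δ - p)) p T := fun r hr => by
  have hneg := W.neg.V_le_of_hasExpBound_a hp ha.neg hr
  rw [abs_neg] at hneg
  exact abs_le.2 ⟨by linarith, W.V_le_of_hasExpBound_a hp ha hr⟩

/-- The factor lost when an estimate of `V` at rate `p` is turned into one of `a` at rate
`p + x`. -/
noncomputable def bootstrapGain (S : SpectralPair b c h) (C x p : ℝ) : ℝ :=
  C * (1 + Real.exp (-(p * h))) / (1 - S.q) / (p + x) / (1 - S.feedback)

theorem hasExpBound_a_of_V (W : IsWeightedSystem S V a Y M) (hx : 0 < x) (hp : 0 ≤ p)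
    (hC : 0 ≤ C) (ha0 : Tendsto a atBot (nhds 0)) (ha1 : ∀ r ≤ T, |a r| ≤ 1)
    (hM : ∀ r ≤ T, |M r| ≤ C * Real.exp (x * r) * (|Y r| + |Y (r - h)|))
    (hV : HasExpBound V K p T) : HasExpBound a (K * bootstrapGain S C x p) (p + x) T := by
  have := W.hasExpBound_a_of_M (by linarith) ha0 ha1
    (.of_le_mul_add_shift hC S.h_pos.le hM (W.hasExpBound_Y hp hV))
  convert this using 1
  rw [bootstrapGain]; ring

theorem exists_hasExpBound_a_gt (W : IsWeightedSystem S V a Y M) (hx : 0 < x) (hC : 0 ≤ C)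
    (hT : T ≤ 0) (ha0 : Tendsto a atBot (nhds 0)) (ha1 : ∀ r ≤ T, |a r| ≤ 1)
    (hM : ∀ r ≤ T, |M r| ≤ C * Real.exp (x * r) * (|Y r| + |Y (r - h)|))
    (hY : HasExpBound Y K (-(x / 2)) T) :
    ∃ p > S.δ, ∃ K', HasExpBound a K' p T := by
  have hx2 : -(x / 2) + x = x / 2 := by ring
  have hinit : ∃ K', HasExpBound a K' (x / 2) T :=
    ⟨_, W.hasExpBound_a_of_M (half_pos hx) ha0 ha1
      (by simpa only [hx2] using HasExpBound.of_le_mul_add_shift hC S.h_pos.le hM hY)⟩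
  have hrate : ∀ n : ℕ, (∃ p ≥ (n + 1) * (x / 2), ∃ K', HasExpBound a K' p T)
      ∨ ∃ p > S.δ, ∃ K', HasExpBound a K' p T := by
    intro n
    induction n with
    | zero => exact Or.inl ⟨x / 2, by norm_num, hinit⟩
    | succ n ih =>
      refine ih.elim ?_ Or.inr
      rintro ⟨p, hp, K', hK'⟩
      rcases lt_or_ge S.δ p with hlt | hle
      · exact Or.inr ⟨p, hlt, K', hK'⟩
      -- Passing through `V` needs a rate below `δ`; give up `x / 4` and regain `x`.
      · have hn : (0 : ℝ) ≤ n * (x / 2) := by positivity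
        refine Or.inl ⟨p - x / 4 + x, ?_, _, W.hasExpBound_a_of_V hx (by linarith) hC ha0 ha1 hM
          (W.hasExpBound_V (by linarith) (hK'.of_rate_le hT (by linarith : p - x / 4 ≤ p)))⟩
        push_cast
        linarith
  obtain ⟨n, hn⟩ := exists_nat_gt (S.δ / (x / 2))
  rw [div_lt_iff₀ (half_pos hx)] at hn
  rcases hrate n with ⟨p, hp, hK'⟩ | hfast
  · exact ⟨p, by linarith, hK'⟩
  · exact hfast

theorem eventually_V_eq_zero (W : IsWeightedSystem S V a Y M) (hx : 0 < x) (hC : 0 ≤ C)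
    (ha0 : Tendsto a atBot (nhds 0)) (ha1 : ∀ r ≤ T, |a r| ≤ 1)
    (hM : ∀ r ≤ T, |M r| ≤ C * Real.exp (x * r) * (|Y r| + |Y (r - h)|)) (hp : S.δ < p)
    (ha : HasExpBound a K p T)
    (hlim : Tendsto (fun r => Real.exp (-(S.δ * r)) * V r) atBot (nhds 0)) :
    ∀ᶠ t in atBot, V t = 0 := by
  have hpδ := sub_pos.2 hp
  have hV_of_a : ∀ {κ T' : ℝ}, HasExpBound a κ p T' → HasExpBound V (κ / (p - S.δ)) p T' :=
    fun hκ => ((hκ.exp_neg_mul S.δ).neg.of_deriv hpδ W.hasDerivAt_exp_neg_mul_V hlim).of_exp_neg_mul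
  -- On a sufficiently early half-line, the round trip `V → a → V` gains a factor `1 / 2`.
  obtain ⟨T', hhalf, hT'⟩ := (((tendsto_mul_exp_atBot (bootstrapGain S C x p / (p - S.δ))
    hx).eventually_lt_const one_half_pos).and (eventually_le_atBot T)).exists
  have hstep : ∀ κ, HasExpBound V κ p T' → HasExpBound V (κ * (1 / 2)) p T' := fun κ hκ => by
    have haκ := W.hasExpBound_a_of_V hx (S.δ_nonneg.trans hp.le) hC ha0
      (fun r hr => ha1 r (hr.trans hT')) (fun r hr => hM r (hr.trans hT')) hκ
    have haκ' : HasExpBound a (κ * bootstrapGain S C x p * Real.exp (x * T')) p T' := fun r hr => by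
      refine (haκ r hr).trans ?_
      rw [add_mul p, add_comm, Real.exp_add, ← mul_assoc]
      have := haκ.nonneg
      gcongr
    refine fun r hr => (hV_of_a haκ' r hr).trans (mul_le_mul_of_nonneg_right ?_ (Real.exp_pos _).le)
    refine le_trans (le_of_eq ?_) (mul_le_mul_of_nonneg_left hhalf.le hκ.nonneg)
    ring
  have hiter : ∀ n : ℕ, HasExpBound V (K / (p - S.δ) * (1 / 2) ^ n) p T' := by
    intro n
    induction n with
    | zero => simpa only [pow_zero, mul_one] using (hV_of_a ha).mono hT'
    | succ n ih => simpa only [pow_succ, mul_assoc] using hstep _ ih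
  filter_upwards [eventually_le_atBot T'] with t ht
  have hgeom : Tendsto (fun n : ℕ => K / (p - S.δ) * (1 / 2 : ℝ) ^ n * Real.exp (p * t)) atTop
      (nhds 0) := by
    simpa only [mul_zero, zero_mul] using ((tendsto_pow_atTop_nhds_zero_of_lt_one one_half_pos.le
      one_half_lt_one).const_mul (K / (p - S.δ))).mul_const (Real.exp (p * t))
  exact abs_nonpos_iff.1 (ge_of_tendsto' hgeom fun n => hiter n t ht)

theorem eventually_sign (W : IsWeightedSystem S V a Y M) (hx : 0 < x) (hC : 0 ≤ C)
    (hT : T ≤ 0) (ha0 : Tendsto a atBot (nhds 0)) (ha1 : ∀ r ≤ T, |a r| ≤ 1)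
    (hM : ∀ r ≤ T, |M r| ≤ C * Real.exp (x * r) * (|Y r| + |Y (r - h)|))
    (hY : HasExpBound Y K (-(x / 2)) T) :
    (∀ᶠ t in atBot, V t = 0) ∨ (∀ᶠ t in atBot, 0 < V t) ∨ ∀ᶠ t in atBot, V t < 0 := by
  obtain ⟨p, hp, K', ha⟩ := W.exists_hasExpBound_a_gt hx hC hT ha0 ha1 hM hY
  obtain ⟨L, hL⟩ := (ha.exp_neg_mul S.δ).neg.exists_limit (sub_pos.2 hp) W.hasDerivAt_exp_neg_mul_V
  have hlim := hL.tendsto_of_sub (sub_pos.2 hp)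
  rcases lt_trichotomy L 0 with hneg | rfl | hpos
  · refine Or.inr (Or.inr ?_)
    filter_upwards [hlim.eventually_lt_const hneg] with t ht
    exact neg_of_mul_neg_right ht (Real.exp_pos _).le
  · exact Or.inl (W.eventually_V_eq_zero hx hC ha0 ha1 hM hp ha hlim)
  · refine Or.inr (Or.inl ?_)
    filter_upwards [hlim.eventually_const_lt hpos] with t ht
    exact pos_of_mul_pos_right ht (Real.exp_pos _).le

end Bootstrap

end IsWeightedSystem

/-! ### Weighted systems: maximum principle and continuation -/

theorem energy_deriv_le {δ D e v α m C : ℝ} (hδ : 0 ≤ δ) (hD : 0 ≤ D) (hC : 0 ≤ C)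
    (hm : |m| ≤ C * |v|) :
    2 * v * (δ * v - α) + 2 * α * (-D * α + (v - e * v) - m)
      ≤ (2 * δ + 2 + |1 - e| + C) * (v ^ 2 + α ^ 2) := by
  have hprod : |v| * |α| ≤ (v ^ 2 + α ^ 2) / 2 := by
    rw [← sq_abs v, ← sq_abs α]
    linarith [two_mul_le_add_sq |v| |α|]
  have hcross : -(v * α) ≤ |v| * |α| := by
    rw [← abs_mul]; exact neg_le_abs _
  have hlin : (1 - e) * (v * α) ≤ |1 - e| * (|v| * |α|) := by
    rw [← abs_mul v, ← abs_mul]; exact le_abs_self _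
  have hforce : -(α * m) ≤ C * (|v| * |α|) := by
    refine (neg_le_abs _).trans ?_
    rw [abs_mul]
    linarith [mul_le_mul_of_nonneg_left hm (abs_nonneg α)]
  linarith [mul_nonneg hD (sq_nonneg α), mul_le_mul_of_nonneg_left hprod (abs_nonneg (1 - e)),
    mul_le_mul_of_nonneg_left hprod hC, mul_nonneg hδ (sq_nonneg α), sq_nonneg v, sq_nonneg α]

namespace IsWeightedSystem

variable {b c h : ℝ} {S : SpectralPair b c h} {V a Y M : ℝ → ℝ}

section MaximumPrinciple

variable {T : ℝ}

theorem Y_pos_of_V_pos (W : IsWeightedSystem S V a Y M) (hV : ∀ t < T, 0 < V t) {t : ℝ}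
    (ht : t < T) : 0 < Y t := by
  have hY : ∀ r < T, 0 ≤ Y r := fun r hr => by
    have := W.neg.shiftDecay_Y.le_div S.q_nonneg S.q_lt_one S.h_pos.le (s := 0) (t := r)
      fun x hx => by rw [W.neutral x]; linarith [hV x (hx.trans_lt hr)]
    rwa [zero_div, neg_nonpos] at this
  rw [W.neutral t]
  exact add_pos_of_pos_of_nonneg (hV t ht)
    (mul_nonneg S.q_nonneg (hY (t - h) (by linarith [S.h_pos])))

theorem a_nonpos_of_V_pos (W : IsWeightedSystem S V a Y M) (ha0 : Tendsto a atBot (nhds 0))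
    (hM : ∀ t, 0 < Y t → 0 < Y (t - h) → 0 < M t) (hV : ∀ t < T, 0 < V t) :
    ∀ t < T, a t ≤ 0 := by
  by_contra! ⟨t₂, ht₂, hpos⟩
  obtain ⟨N, hN⟩ := eventually_atBot.1 (ha0.eventually_lt_const hpos)
  have hNt : N ≤ t₂ := le_of_not_ge fun hcon => (hN t₂ hcon).false
  obtain ⟨t₁, ht₁, hmax⟩ := isCompact_Icc.exists_isMaxOn (Set.nonempty_Icc.2 hNt)
    W.continuous_a.continuousOn
  have hglobal : ∀ r ≤ t₁, a r ≤ a t₁ := fun r hr => by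
    rcases le_total r N with hrN | hNr
    · exact (hN r hrN).le.trans (hmax (Set.right_mem_Icc.2 hNt))
    · exact hmax ⟨hNr, hr.trans ht₁.2⟩
  have hderiv := hasDerivAt_nonneg_of_left_max (W.hasDerivAt_a t₁) (by
    filter_upwards [self_mem_nhdsWithin] with s hs using hglobal s (le_of_lt hs))
  have ht₁T : t₁ < T := ht₁.2.trans_lt ht₂
  have hMpos := hM t₁ (W.Y_pos_of_V_pos hV ht₁T)
    (W.Y_pos_of_V_pos hV (by linarith [S.h_pos]))
  linarith [W.gap_le hglobal]

theorem exp_mul_V_le_of_a_nonpos (W : IsWeightedSystem S V a Y M) {s t : ℝ} (hst : s ≤ t)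
    (ha : ∀ r ∈ Set.Icc s t, a r ≤ 0) :
    Real.exp (-(S.δ * s)) * V s ≤ Real.exp (-(S.δ * t)) * V t :=
  exp_mul_le_of_le_hasDerivAt hst (fun r _ => W.hasDerivAt_V r) fun r hr => by
    linarith [ha r hr]

theorem V_pos_of_eventually_pos (W : IsWeightedSystem S V a Y M)
    (ha0 : Tendsto a atBot (nhds 0)) (hM : ∀ t, 0 < Y t → 0 < Y (t - h) → 0 < M t)
    (hev : ∀ᶠ t in atBot, 0 < V t) (t : ℝ) : 0 < V t := by
  by_contra hcon
  obtain ⟨N, hN⟩ := eventually_atBot.1 hev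
  set Z := {t | V t ≤ 0}
  have hZ : BddBelow Z := ⟨N, fun s hs => le_of_not_ge fun hsN => (hN s hsN).not_ge hs⟩
  have hT : sInf Z ∈ Z :=
    (isClosed_le W.continuous_V continuous_const).csInf_mem ⟨t, not_lt.1 hcon⟩ hZ
  set T := sInf Z
  have hV : ∀ s < T, 0 < V s := fun s hs => not_le.1 fun hsZ => (csInf_le hZ hsZ).not_gt hs
  have ha := W.a_nonpos_of_V_pos ha0 hM hV
  have haT : a T ≤ 0 := by
    refine le_of_tendsto ((W.continuous_a.tendsto T).mono_left
      (nhdsWithin_le_nhds (s := Set.Iio T))) ?_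
    filter_upwards [self_mem_nhdsWithin] with s hs using ha s hs
  have hgrow := W.exp_mul_V_le_of_a_nonpos (sub_one_lt T).le fun r hr =>
    hr.2.eq_or_lt.elim (fun heq => heq ▸ haT) (ha r)
  have hbefore := mul_pos (Real.exp_pos (-(S.δ * (T - 1)))) (hV (T - 1) (sub_one_lt T))
  exact (pos_of_mul_pos_right (hbefore.trans_le hgrow) (Real.exp_pos _).le).not_ge hT

theorem tendsto_V_atTop (W : IsWeightedSystem S V a Y M) : Tendsto V atTop (nhds 0) := by
  obtain ⟨C, hC⟩ := W.bound
  refine squeeze_zero_norm (fun t => (hC t).1) ?_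
  simpa only [mul_zero, Function.comp_def, id] using ((Real.tendsto_exp_neg_atTop_nhds_zero).comp
    (tendsto_id.const_mul_atTop S.lam_pos)).const_mul C

theorem not_eventually_V_pos (W : IsWeightedSystem S V a Y M)
    (ha0 : Tendsto a atBot (nhds 0)) (hM : ∀ t, 0 < Y t → 0 < Y (t - h) → 0 < M t) :
    ¬∀ᶠ t in atBot, 0 < V t := by
  intro hev
  have hpos := W.V_pos_of_eventually_pos ha0 hM hev
  have ha : ∀ t, a t ≤ 0 := fun t =>
    W.a_nonpos_of_V_pos ha0 hM (fun r _ => hpos r) t (lt_add_one t)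
  obtain ⟨t, hVt, ht⟩ :=
    ((W.tendsto_V_atTop.eventually_lt_const (hpos 0)).and (eventually_ge_atTop 0)).exists
  have hgrow := W.exp_mul_V_le_of_a_nonpos ht fun r _ => ha r
  rw [mul_zero, neg_zero, Real.exp_zero, one_mul] at hgrow
  linarith [mul_le_mul_of_nonneg_right (exp_neg_mul_le_one S.δ_nonneg ht) (hpos t).le]

end MaximumPrinciple

section Continuation

variable {C T : ℝ}

theorem Y_eq_zero_of_V_eq_zero (W : IsWeightedSystem S V a Y M) (hV : ∀ t ≤ T, V t = 0) :
    ∀ t ≤ T, Y t = 0 := fun t ht => by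
  have := W.hasExpBound_Y (K := 0) le_rfl
    (fun r hr => by rw [hV r hr, abs_zero, zero_mul]) t ht
  rwa [zero_div, zero_mul, abs_nonpos_iff] at this

theorem a_eq_zero_of_V_eq_zero (W : IsWeightedSystem S V a Y M) (hV : ∀ t ≤ T, V t = 0)
    {t : ℝ} (ht : t < T) : a t = 0 := by
  have hlocal : V =ᶠ[nhds t] fun _ => 0 := by
    filter_upwards [Iio_mem_nhds ht] with s hs using hV s (le_of_lt hs)
  have := (W.hasDerivAt_V t).unique ((hasDerivAt_const t (0 : ℝ)).congr_of_eventuallyEq hlocal)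
  rw [hV t ht.le] at this
  linarith

theorem V_eq_zero_of_le_add_half (W : IsWeightedSystem S V a Y M) (hC : 0 ≤ C)
    (hM : ∀ t, |M t| ≤ C * (|Y t| + |Y (t - h)|)) (hV : ∀ t ≤ T, V t = 0) :
    ∀ t ≤ T + h / 2, V t = 0 := by
  have hh := S.h_pos
  have hY := W.Y_eq_zero_of_V_eq_zero hV
  intro t ht
  rcases le_total t T with htT | hTt
  · exact hV t htT
  set s := T - h / 2 with hs
  have hsT : s < T := by linarith
  have henergy := exp_mul_le_of_hasDerivAt_le (s := s) (t := t) (by linarith)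
    (fun r _ => ((W.hasDerivAt_V r).pow 2).add ((W.hasDerivAt_a r).pow 2))
    (k := 2 * S.δ + 2 + |1 - S.e₂| + C)
    (fun r hr => by
      -- The delayed arguments fall in the region where `Y` is already known to vanish.
      have hYh : Y (r - h) = 0 := hY _ (by linarith [hr.2])
      have hYr : Y r = V r := by rw [W.neutral r, hYh, mul_zero, add_zero]
      have hMr := hM r
      rw [hYh, hYr, abs_zero, add_zero] at hMr
      refine le_trans (le_of_eq ?_) (energy_deriv_le S.δ_nonneg S.D_nonneg hC hMr)
      rw [hYr]; ring)
  simp only [Pi.add_apply, Pi.pow_apply, hV s hsT.le, W.a_eq_zero_of_V_eq_zero hV hsT] at henergy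
  norm_num at henergy
  have hsum : V t ^ 2 + a t ^ 2 ≤ 0 := by
    by_contra! hcon
    exact henergy.not_gt (mul_pos (Real.exp_pos _) hcon)
  exact pow_eq_zero_iff two_ne_zero |>.1
    (le_antisymm (by linarith [sq_nonneg (a t)]) (sq_nonneg (V t)))

theorem Y_eq_zero_of_eventually (W : IsWeightedSystem S V a Y M) (hC : 0 ≤ C)
    (hM : ∀ t, |M t| ≤ C * (|Y t| + |Y (t - h)|)) (hV : ∀ᶠ t in atBot, V t = 0) (t : ℝ) :
    Y t = 0 := by
  have hh := half_pos S.h_pos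
  obtain ⟨N, hN⟩ := eventually_atBot.1 hV
  have hsteps : ∀ n : ℕ, ∀ t ≤ N + n * (h / 2), V t = 0 := by
    intro n
    induction n with
    | zero => simpa only [Nat.cast_zero, zero_mul, add_zero] using hN
    | succ n ih =>
      intro t ht
      refine W.V_eq_zero_of_le_add_half hC hM ih t (ht.trans_eq ?_)
      push_cast; ring
  refine W.Y_eq_zero_of_V_eq_zero (fun r _ => ?_) t le_rfl
  obtain ⟨n, hn⟩ := exists_nat_ge ((r - N) / (h / 2))
  rw [div_le_iff₀ hh] at hn
  exact hsteps n r (by linarith)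

end Continuation

end IsWeightedSystem

/-! ### Front profiles: growth rates -/

/-- A monotone front `φ` with delay `h = c τ`, together with its neutral part `v` and `w = v'`. -/
structure IsFrontProfile (b c h : ℝ) (φ v w : ℝ → ℝ) : Prop where
  b_nonneg : 0 ≤ b
  b_lt_one : b < 1
  c_pos : 0 < c
  h_pos : 0 < h
  mono : Monotone φ
  tendsto_bot : Tendsto φ atBot (nhds 0)
  tendsto_top : Tendsto φ atTop (nhds 1)
  neutral : ∀ t, v t = φ t - b * φ (t - h)
  hasDerivAt_v : ∀ t, HasDerivAt v (w t) t
  hasDerivAt_w : ∀ t, HasDerivAt w (c * w t - φ t * (1 - φ (t - h))) t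

theorem IsMonotoneFront.isFrontProfile {b c τ : ℝ} {φ : ℝ → ℝ} (hb0 : 0 ≤ b) (hb1 : b < 1)
    (hτ : 0 < τ) (hc : 0 < c) (hφ : IsMonotoneFront b c τ φ) :
    IsFrontProfile b c (c * τ) φ (fun t => φ t - b * φ (t - c * τ))
      (deriv fun t => φ t - b * φ (t - c * τ)) := by
  obtain ⟨hmono, hsmooth, heq, hbot, htop⟩ := hφ
  have hderiv : Differentiable ℝ (deriv fun t => φ t - b * φ (t - c * τ)) :=
    hsmooth.deriv'.differentiable one_ne_zero
  exact ⟨hb0, hb1, hc, mul_pos hc hτ, hmono, hbot, htop, fun _ => rfl,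
    fun t => (hsmooth.differentiable two_ne_zero t).hasDerivAt,
    fun t => (hderiv t).hasDerivAt.congr_deriv (by linarith [heq t])⟩

namespace IsFrontProfile

variable {b c h : ℝ} {φ v w : ℝ → ℝ}

theorem shift (P : IsFrontProfile b c h φ v w) (s : ℝ) :
    IsFrontProfile b c h (fun t => φ (t + s)) (fun t => v (t + s)) (fun t => w (t + s)) where
  b_nonneg := P.b_nonneg
  b_lt_one := P.b_lt_one
  c_pos := P.c_pos
  h_pos := P.h_pos
  mono _ _ hst := P.mono (by linarith)
  tendsto_bot := P.tendsto_bot.comp (tendsto_atBot_add_const_right _ s tendsto_id)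
  tendsto_top := P.tendsto_top.comp (tendsto_atTop_add_const_right _ s tendsto_id)
  neutral t := by rw [P.neutral, sub_add_eq_add_sub]
  hasDerivAt_v t := (P.hasDerivAt_v (t + s)).comp_add_const t s
  hasDerivAt_w t := by
    simpa only [← sub_add_eq_add_sub] using (P.hasDerivAt_w (t + s)).comp_add_const t s

theorem nonneg (P : IsFrontProfile b c h φ v w) (t : ℝ) : 0 ≤ φ t :=
  P.mono.le_of_tendsto P.tendsto_bot t

theorem le_one (P : IsFrontProfile b c h φ v w) (t : ℝ) : φ t ≤ 1 :=
  P.mono.ge_of_tendsto P.tendsto_top t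

theorem source_nonneg (P : IsFrontProfile b c h φ v w) (t : ℝ) : 0 ≤ φ t * (1 - φ (t - h)) :=
  mul_nonneg (P.nonneg t) (sub_nonneg.2 (P.le_one (t - h)))

theorem mul_le_v (P : IsFrontProfile b c h φ v w) (t : ℝ) : (1 - b) * φ t ≤ v t := by
  have hdelay : φ (t - h) ≤ φ t := P.mono (sub_le_self t P.h_pos.le)
  rw [P.neutral t]
  linarith [mul_le_mul_of_nonneg_left hdelay P.b_nonneg]

theorem v_le (P : IsFrontProfile b c h φ v w) (t : ℝ) : v t ≤ φ t := by
  rw [P.neutral t]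
  linarith [mul_nonneg P.b_nonneg (P.nonneg (t - h))]

theorem le_v_div (P : IsFrontProfile b c h φ v w) (t : ℝ) : φ t ≤ v t / (1 - b) := by
  rw [le_div_iff₀' (sub_pos.2 P.b_lt_one)]
  exact P.mul_le_v t

theorem v_nonneg (P : IsFrontProfile b c h φ v w) (t : ℝ) : 0 ≤ v t :=
  (mul_nonneg (sub_pos.2 P.b_lt_one).le (P.nonneg t)).trans (P.mul_le_v t)

theorem continuous_v (P : IsFrontProfile b c h φ v w) : Continuous v :=
  continuous_iff_continuousAt.2 fun t => (P.hasDerivAt_v t).continuousAt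

theorem eq_sum (P : IsFrontProfile b c h φ v w) (n : ℕ) (t : ℝ) :
    φ t = ∑ k ∈ Finset.range n, b ^ k * v (t - k * h) + b ^ n * φ (t - n * h) := by
  induction n with
  | zero => simp
  | succ n ih =>
    have hshift : t - n * h - h = t - (n + 1 : ℕ) * h := by push_cast; ring
    rw [Finset.sum_range_succ, P.neutral (t - n * h), hshift]
    exact ih.trans (by ring)

theorem continuous (P : IsFrontProfile b c h φ v w) : Continuous φ := by
  have hunif : TendstoUniformly
      (fun (n : ℕ) t => ∑ k ∈ Finset.range n, b ^ k * v (t - k * h)) φ atTop := by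
    rw [Metric.tendstoUniformly_iff]
    intro ε hε
    filter_upwards [(tendsto_pow_atTop_nhds_zero_of_lt_one P.b_nonneg
      P.b_lt_one).eventually_lt_const hε] with n hn t
    have hbn := pow_nonneg P.b_nonneg n
    rw [Real.dist_eq, sub_eq_of_eq_add' (P.eq_sum n t), abs_of_nonneg (mul_nonneg hbn (P.nonneg _))]
    exact (mul_le_of_le_one_right hbn (P.le_one _)).trans_lt hn
  refine hunif.continuous (Eventually.of_forall fun n => ?_).frequently
  exact continuous_finsetSum _ fun k _ =>
    continuous_const.mul (P.continuous_v.comp (by fun_prop))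

theorem w_le_exp_mul (P : IsFrontProfile b c h φ v w) {s t : ℝ} (hst : s ≤ t) :
    w t ≤ Real.exp (c * (t - s)) * w s :=
  le_exp_mul_of_hasDerivAt_le hst (fun r _ => P.hasDerivAt_w r)
    fun r _ => sub_le_self _ (P.source_nonneg r)

theorem w_nonneg (P : IsFrontProfile b c h φ v w) (t₀ : ℝ) : 0 ≤ w t₀ := by
  by_contra! hneg
  have hdecr : ∀ t, t₀ ≤ t → w t ≤ w t₀ := fun t ht =>
    (P.w_le_exp_mul ht).trans (mul_le_of_one_le_left hneg.le
      (Real.one_le_exp (mul_nonneg P.c_pos.le (sub_nonneg.2 ht))))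
  set L := (v t₀ + 1) / -w t₀
  have hwL : w t₀ * L = -(v t₀ + 1) := by
    simp only [L, div_neg, mul_neg, mul_div_cancel₀ _ hneg.ne]
  have hL : 0 ≤ L := div_nonneg (by linarith [P.v_nonneg t₀]) (neg_pos.2 hneg).le
  have hdrop := sub_le_mul_sub_of_hasDerivAt_le (by linarith : t₀ ≤ t₀ + L)
    (fun r _ => P.hasDerivAt_v r) fun r hr => hdecr r hr.1
  rw [add_sub_cancel_left, hwL] at hdrop
  linarith [P.v_nonneg (t₀ + L)]

theorem v_mono (P : IsFrontProfile b c h φ v w) : Monotone v := fun _ _ hst =>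
  le_of_hasDerivAt_nonneg hst (fun r _ => P.hasDerivAt_v r) fun r _ => P.w_nonneg r

theorem hasDerivAt_flux (P : IsFrontProfile b c h φ v w) (t : ℝ) :
    HasDerivAt (fun t => c * v t - w t) (φ t * (1 - φ (t - h))) t :=
  (((P.hasDerivAt_v t).const_mul c).sub (P.hasDerivAt_w t)).congr_deriv (by ring)

theorem flux_mono (P : IsFrontProfile b c h φ v w) : Monotone fun t => c * v t - w t :=
  fun _ _ hst => le_of_hasDerivAt_nonneg hst (fun r _ => P.hasDerivAt_flux r)
    fun r _ => P.source_nonneg r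

theorem w_le_c_mul (P : IsFrontProfile b c h φ v w) (t₀ : ℝ) : w t₀ ≤ c * v t₀ := by
  by_contra! hgt
  set d := w t₀ - c * v t₀
  have hd : 0 < d := sub_pos.2 hgt
  have hsteep : ∀ t ≤ t₀, d ≤ w t := fun t ht => by
    have hflux := P.flux_mono ht
    linarith [mul_nonneg P.c_pos.le (P.v_nonneg t)]
  set L := (v t₀ + 1) / d
  have hdL : d * L = v t₀ + 1 := mul_div_cancel₀ _ hd.ne'
  have hL : 0 ≤ L := div_nonneg (by linarith [P.v_nonneg t₀]) hd.le
  have hrise := mul_sub_le_sub_of_le_hasDerivAt (by linarith : t₀ - L ≤ t₀)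
    (fun r _ => P.hasDerivAt_v r) fun r hr => hsteep r hr.2
  rw [sub_sub_cancel, hdL] at hrise
  linarith [P.v_nonneg (t₀ - L)]

theorem v_le_exp_mul (P : IsFrontProfile b c h φ v w) {κ : ℝ} (hκ : ∀ t, w t ≤ κ * v t)
    {s t : ℝ} (hst : s ≤ t) : v t ≤ Real.exp (κ * (t - s)) * v s :=
  le_exp_mul_of_hasDerivAt_le hst (fun r _ => P.hasDerivAt_v r) fun r _ => hκ r

theorem v_pos (P : IsFrontProfile b c h φ v w) (t₀ : ℝ) : 0 < v t₀ := by
  refine (P.v_nonneg t₀).lt_of_ne fun h0 => ?_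
  have hzero : ∀ t, t₀ ≤ t → φ t ≤ 0 := fun t ht => by
    have hv := P.v_le_exp_mul P.w_le_c_mul ht
    rw [← h0, mul_zero] at hv
    exact nonpos_of_mul_nonpos_right ((P.mul_le_v t).trans hv) (sub_pos.2 P.b_lt_one)
  exact zero_lt_one.not_ge (le_of_tendsto P.tendsto_top ((eventually_ge_atTop t₀).mono hzero))

theorem pos (P : IsFrontProfile b c h φ v w) (t : ℝ) : 0 < φ t :=
  (P.v_pos t).trans_le (P.v_le t)

theorem tendsto_v_top (P : IsFrontProfile b c h φ v w) : Tendsto v atTop (nhds (1 - b)) := by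
  have hdelay := P.tendsto_top.comp (tendsto_atTop_add_const_right _ (-h) tendsto_id)
  have hlim := P.tendsto_top.sub (hdelay.const_mul b)
  rw [mul_one] at hlim
  exact hlim.congr fun t => (P.neutral t).symm

theorem tendsto_w_top (P : IsFrontProfile b c h φ v w) : Tendsto w atTop (nhds 0) := by
  have hincr : Tendsto (fun t => Real.exp c * (v t - v (t - 1))) atTop (nhds 0) := by
    have hprev := P.tendsto_v_top.comp (tendsto_atTop_add_const_right _ (-1) tendsto_id)
    simpa only [sub_self, mul_zero, sub_eq_add_neg, Function.comp_def, id] using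
      (P.tendsto_v_top.sub hprev).const_mul (Real.exp c)
  refine squeeze_zero P.w_nonneg (fun t => ?_) hincr
  have hw : ∀ r ∈ Set.Icc (t - 1) t, Real.exp (-c) * w t ≤ w r := fun r hr => by
    rw [Real.exp_neg, inv_mul_le_iff₀ (Real.exp_pos c)]
    refine (P.w_le_exp_mul hr.2).trans (mul_le_mul_of_nonneg_right ?_ (P.w_nonneg r))
    exact Real.exp_le_exp.2 (mul_le_of_le_one_right P.c_pos.le (by linarith [hr.1]))
  have hv := mul_sub_le_sub_of_le_hasDerivAt (by linarith) (fun r _ => P.hasDerivAt_v r) hw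
  rwa [sub_sub_cancel, mul_one, Real.exp_neg, inv_mul_le_iff₀ (Real.exp_pos c)] at hv

theorem exists_half_v_le_source (P : IsFrontProfile b c h φ v w) :
    ∃ T, ∀ t ≤ T, v t / 2 ≤ φ t * (1 - φ (t - h)) := by
  obtain ⟨T, hT⟩ := eventually_atBot.1 (P.tendsto_bot.eventually_lt_const one_half_pos)
  refine ⟨T, fun t ht => ?_⟩
  have hhalf : 1 / 2 ≤ 1 - φ (t - h) := by linarith [hT (t - h) (by linarith [P.h_pos])]
  calc v t / 2 ≤ φ t * (1 / 2) := by linarith [P.v_le t]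
    _ ≤ φ t * (1 - φ (t - h)) := mul_le_mul_of_nonneg_left hhalf (P.nonneg t)

theorem flux_le_exp_mul (P : IsFrontProfile b c h φ v w) {T : ℝ}
    (hT : ∀ t ≤ T, v t / 2 ≤ φ t * (1 - φ (t - h))) {t : ℝ} (ht : t ≤ T) :
    c * v t - w t ≤ Real.exp (1 / (2 * c) * (t - T)) * (c * v T - w T) := by
  refine le_exp_mul_of_le_hasDerivAt ht (fun r _ => P.hasDerivAt_flux r)
    fun r hr => le_trans ?_ (hT r hr.2)
  have hc := P.c_pos
  calc 1 / (2 * c) * (c * v r - w r) ≤ 1 / (2 * c) * (c * v r) :=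
        mul_le_mul_of_nonneg_left (sub_le_self _ (P.w_nonneg r)) (by positivity)
    _ = v r / 2 := by field_simp

theorem v_sub_one_le_flux (P : IsFrontProfile b c h φ v w) {T : ℝ}
    (hT : ∀ t ≤ T, v t / 2 ≤ φ t * (1 - φ (t - h))) {t : ℝ} (ht : t ≤ T) :
    v (t - 1) ≤ 2 * (c * v t - w t) := by
  have hflux := mul_sub_le_sub_of_le_hasDerivAt (sub_le_self t zero_le_one)
    (fun r _ => P.hasDerivAt_flux r) (k := v (t - 1) / 2)
    fun r hr => (div_le_div_of_nonneg_right (P.v_mono hr.1) zero_le_two).trans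
      (hT r (hr.2.trans ht))
  linarith [P.w_le_c_mul (t - 1)]

theorem exists_exp_bound (P : IsFrontProfile b c h φ v w) :
    ∃ C x, 0 < x ∧ 0 ≤ C ∧ ∀ t, φ t ≤ C * Real.exp (x * t) := by
  obtain ⟨T, hT⟩ := P.exists_half_v_le_source
  set x := 1 / (2 * c)
  have hx : 0 < x := one_div_pos.2 (mul_pos two_pos P.c_pos)
  set C := 2 * (c * v T - w T) / (1 - b)
  have hC : 0 ≤ C := div_nonneg (mul_nonneg zero_le_two (sub_nonneg.2 (P.w_le_c_mul T)))
    (sub_pos.2 P.b_lt_one).le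
  have hbound : ∀ t, φ t ≤ (C + 1) * Real.exp (x * (t + 1 - T)) := fun t => by
    have hexp := Real.exp_pos (x * (t + 1 - T))
    rcases le_total (t + 1) T with ht | ht
    · have hv := P.v_sub_one_le_flux hT ht
      rw [add_sub_cancel_right] at hv
      calc φ t ≤ v t / (1 - b) := P.le_v_div t
        _ ≤ 2 * (Real.exp (x * (t + 1 - T)) * (c * v T - w T)) / (1 - b) :=
          div_le_div_of_nonneg_right (by linarith [P.flux_le_exp_mul hT ht])
            (sub_pos.2 P.b_lt_one).le
        _ = C * Real.exp (x * (t + 1 - T)) := by ring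
        _ ≤ (C + 1) * Real.exp (x * (t + 1 - T)) := by linarith
    · have hone := Real.one_le_exp (mul_nonneg hx.le (sub_nonneg.2 ht))
      linarith [P.le_one t, mul_nonneg hC hexp.le]
  refine ⟨(C + 1) * Real.exp (x * (1 - T)), x, hx, by positivity, fun t => ?_⟩
  rw [mul_assoc, ← Real.exp_add, ← mul_add, add_comm (1 - T), ← add_sub_assoc]
  exact hbound t

theorem shiftDecay (P : IsFrontProfile b c h φ v w) : ShiftDecay b h φ := by
  have := ShiftDecay.of_exp_bound (lam := 0) (C := 1) (G := φ) P.b_nonneg P.b_lt_one P.h_pos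
    fun r => by
      rw [zero_mul, neg_zero, Real.exp_zero, mul_one, abs_of_nonneg (P.nonneg r)]
      exact P.le_one r
  rwa [zero_mul, neg_zero, Real.exp_zero, mul_one] at this

theorem le_exp_mul (P : IsFrontProfile b c h φ v w) {κ : ℝ} (hκ : ∀ t, w t ≤ κ * v t)
    {s t : ℝ} (hst : s ≤ t) : φ t ≤ Real.exp (κ * (t - s)) * φ s := by
  have hdiff := (P.shiftDecay.sub ((P.shiftDecay.shift (t - s)).const_mul
    (Real.exp (κ * (t - s))))).le_div P.b_nonneg P.b_lt_one P.h_pos.le (s := 0) (t := t)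
    fun r _ => by
      have hv := P.v_le_exp_mul hκ (sub_le_self r (sub_nonneg.2 hst))
      rw [sub_sub_cancel, P.neutral, P.neutral, sub_right_comm r] at hv
      linarith
  rw [sub_sub_cancel, zero_div] at hdiff
  linarith

theorem neutralGain_mul_v_le (P : IsFrontProfile b c h φ v w) {κ : ℝ} (hκ0 : 0 ≤ κ)
    (hκ : ∀ t, w t ≤ κ * v t) (t : ℝ) : neutralGain b h κ * v t ≤ φ t := by
  have hgain := neutralGain_mul P.b_nonneg P.b_lt_one P.h_pos.le hκ0
  have hgain0 := neutralGain_pos P.b_nonneg P.b_lt_one P.h_pos.le hκ0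
  have hv : ShiftDecay b h v := by
    rw [funext P.neutral]
    exact P.shiftDecay.sub ((P.shiftDecay.shift h).const_mul b)
  have hdiff := ((hv.const_mul (neutralGain b h κ)).sub P.shiftDecay).le_div P.b_nonneg P.b_lt_one
    P.h_pos.le (s := 0) (t := t) fun r _ => by
      have hdelay : Real.exp (-(κ * h)) * v r ≤ v (r - h) := by
        rw [Real.exp_neg, inv_mul_le_iff₀ (Real.exp_pos _)]
        simpa only [sub_sub_cancel] using P.v_le_exp_mul hκ (sub_le_self r P.h_pos.le)
      linear_combination mul_le_mul_of_nonneg_left hdelay (mul_nonneg hgain0.le P.b_nonneg)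
        + v r * hgain + P.neutral r
  rw [zero_div] at hdiff
  linarith

theorem source_le_exp_mul (P : IsFrontProfile b c h φ v w) {κ : ℝ} (hκ : ∀ t, w t ≤ κ * v t)
    {s t : ℝ} (hst : s ≤ t) :
    φ t * (1 - φ (t - h)) ≤ φ s * (1 - φ (s - h)) * Real.exp (κ * (t - s)) := by
  have hdelay : φ (s - h) ≤ φ (t - h) := P.mono (sub_le_sub_right hst h)
  have := P.nonneg s
  calc φ t * (1 - φ (t - h)) ≤ (Real.exp (κ * (t - s)) * φ s) * (1 - φ (t - h)) :=
        mul_le_mul_of_nonneg_right (P.le_exp_mul hκ hst) (sub_nonneg.2 (P.le_one _))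
    _ ≤ (Real.exp (κ * (t - s)) * φ s) * (1 - φ (s - h)) := by gcongr
    _ = _ := by ring

theorem deriv_gap_nonpos (P : IsFrontProfile b c h φ v w) {κ : ℝ} (hκc : κ ≤ c)
    (hκ : ∀ t, w t ≤ κ * v t) {t₀ t : ℝ} (h0 : (κ - c) * w t₀ + φ t₀ * (1 - φ (t₀ - h)) = 0)
    (ht : t₀ ≤ t) : (κ - c) * w t + φ t * (1 - φ (t - h)) ≤ 0 := by
  set σ := φ t₀ * (1 - φ (t₀ - h))
  have hexp : ∀ r, HasDerivAt (fun r => σ * Real.exp (κ * (r - t₀)))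
      (σ * (κ * Real.exp (κ * (r - t₀)))) r := fun r =>
    (((((hasDerivAt_id r).sub_const t₀).const_mul κ).exp).const_mul σ).congr_deriv (by
      simp only [id]; ring)
  have hle := le_exp_mul_of_hasDerivAt_le (k := c) ht
    (fun r _ => ((P.hasDerivAt_w r).const_mul (κ - c)).add (hexp r)) fun r hr => by
      simp only [Pi.add_apply]
      linear_combination mul_le_mul_of_nonneg_left (P.source_le_exp_mul hκ hr.1) (sub_nonneg.2 hκc)
  simp only [Pi.add_apply, sub_self, mul_zero, Real.exp_zero, mul_one, h0] at hle
  linarith [P.source_le_exp_mul hκ ht]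

theorem w_lt_mul (P : IsFrontProfile b c h φ v w) {κ : ℝ} (hκ0 : 0 < κ) (hκc : κ ≤ c)
    (hκ : ∀ t, w t ≤ κ * v t) (t₀ : ℝ) : w t₀ < κ * v t₀ := by
  refine (hκ t₀).lt_of_ne fun h0 => ?_
  have hgap : ∀ t, HasDerivAt (fun t => κ * v t - w t)
      ((κ - c) * w t + φ t * (1 - φ (t - h))) t := fun t =>
    (((P.hasDerivAt_v t).const_mul κ).sub (P.hasDerivAt_w t)).congr_deriv (by ring)
  have hmin : IsLocalMin (fun t => κ * v t - w t) t₀ :=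
    Eventually.of_forall fun t => (sub_eq_zero.2 h0.symm).trans_le (sub_nonneg.2 (hκ t))
  have hcritical := hmin.hasDerivAt_eq_zero (hgap t₀)
  have hw : ∀ t, t₀ ≤ t → κ * v t₀ ≤ w t := fun t ht => by
    have hanti := sub_le_mul_sub_of_hasDerivAt_le ht (fun r _ => hgap r)
      fun r hr => P.deriv_gap_nonpos hκc hκ hcritical hr.1
    linarith [mul_le_mul_of_nonneg_left (P.v_mono ht) hκ0.le]
  exact (mul_pos hκ0 (P.v_pos t₀)).not_ge
    (ge_of_tendsto P.tendsto_w_top ((eventually_ge_atTop t₀).mono hw))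

theorem hasDerivAt_ratio (P : IsFrontProfile b c h φ v w) (t : ℝ) :
    HasDerivAt (fun t => w t / v t)
      (c * (w t / v t) - φ t * (1 - φ (t - h)) / v t - (w t / v t) ^ 2) t := by
  have hv := (P.v_pos t).ne'
  exact ((P.hasDerivAt_w t).div (P.hasDerivAt_v t) hv).congr_deriv (by field_simp)

theorem continuous_ratio (P : IsFrontProfile b c h φ v w) : Continuous fun t => w t / v t :=
  continuous_iff_continuousAt.2 fun t => (P.hasDerivAt_ratio t).continuousAt

theorem ratio_le (P : IsFrontProfile b c h φ v w) {κ : ℝ} (hκ : ∀ t, w t ≤ κ * v t) (t : ℝ) :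
    w t / v t ≤ κ :=
  (div_le_iff₀ (P.v_pos t)).2 (hκ t)

theorem tendsto_ratio_top (P : IsFrontProfile b c h φ v w) :
    Tendsto (fun t => w t / v t) atTop (nhds 0) := by
  simpa only [zero_div, Pi.div_def] using
    P.tendsto_w_top.div P.tendsto_v_top (sub_pos.2 P.b_lt_one).ne'

theorem deriv_ratio_lt (P : IsFrontProfile b c h φ v w) {κ : ℝ} (hκ0 : 0 ≤ κ) (hκc : κ ≤ c)
    (hκ : ∀ t, w t ≤ κ * v t) {t : ℝ}
    (ht : neutralGain b h κ * φ (t - h) < charFun b c h κ / 4)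
    (hratio : κ - charFun b c h κ / (4 * c) ≤ w t / v t) :
    c * (w t / v t) - φ t * (1 - φ (t - h)) / v t - (w t / v t) ^ 2
      < -(charFun b c h κ / 2) := by
  have hc := P.c_pos
  have hsource : neutralGain b h κ * (1 - φ (t - h)) ≤ φ t * (1 - φ (t - h)) / v t := by
    rw [le_div_iff₀ (P.v_pos t), mul_right_comm]
    exact mul_le_mul_of_nonneg_right (P.neutralGain_mul_v_le hκ0 hκ t)
      (sub_nonneg.2 (P.le_one _))
  have hle := P.ratio_le hκ t
  set ρ := w t / v t
  have hquad : (κ - ρ) * (κ + ρ - c) ≤ charFun b c h κ / 4 := by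
    calc (κ - ρ) * (κ + ρ - c) ≤ (κ - ρ) * c :=
          mul_le_mul_of_nonneg_left (by linarith) (sub_nonneg.2 hle)
      _ ≤ charFun b c h κ / (4 * c) * c := mul_le_mul_of_nonneg_right (by linarith) hc.le
      _ = charFun b c h κ / 4 := by field_simp
  have hχ : charFun b c h κ = κ ^ 2 - c * κ + neutralGain b h κ := rfl
  linarith

theorem exists_ratio_lt_atBot (P : IsFrontProfile b c h φ v w) {κ : ℝ} (hκ0 : 0 ≤ κ)
    (hκc : κ ≤ c) (hκ : ∀ t, w t ≤ κ * v t) (hχ : 0 < charFun b c h κ) :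
    ∃ T, ∀ t ≤ T, w t / v t < κ - charFun b c h κ / (4 * c) := by
  have hsmall : Tendsto (fun t => neutralGain b h κ * φ t) atBot (nhds 0) := by
    simpa only [mul_zero] using P.tendsto_bot.const_mul (neutralGain b h κ)
  obtain ⟨T, hT⟩ := eventually_atBot.1 (hsmall.eventually_lt_const (div_pos hχ four_pos))
  exact ⟨T, fun t ht => lt_of_hasDerivAt_lt_neg_of_bounded (f := fun t => w t / v t)
    (half_pos hχ) P.hasDerivAt_ratio (P.ratio_le hκ)
    (fun r hr => P.deriv_ratio_lt hκ0 hκc hκ (hT (r - h) (by linarith [P.h_pos]))) ht⟩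

theorem exists_lt_w_le_mul (P : IsFrontProfile b c h φ v w) {κ : ℝ} (hκ0 : 0 < κ) (hκc : κ ≤ c)
    (hκ : ∀ t, w t ≤ κ * v t) (hχ : 0 < charFun b c h κ) :
    ∃ κ' < κ, 0 ≤ κ' ∧ ∀ t, w t ≤ κ' * v t := by
  obtain ⟨T, hT⟩ := P.exists_ratio_lt_atBot hκ0.le hκc hκ hχ
  obtain ⟨T', hT'⟩ := eventually_atTop.1 (P.tendsto_ratio_top.eventually_lt_const (half_pos hκ0))
  obtain ⟨t₁, -, hmax⟩ := isCompact_Icc.exists_isMaxOn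
    (Set.nonempty_Icc.2 (le_max_left T T')) P.continuous_ratio.continuousOn
  have hmid : w t₁ / v t₁ < κ := (div_lt_iff₀ (P.v_pos t₁)).2 (P.w_lt_mul hκ0 hκc hκ t₁)
  have hgap : 0 < charFun b c h κ / (4 * c) := div_pos hχ (mul_pos four_pos P.c_pos)
  refine ⟨max (max (κ - charFun b c h κ / (4 * c)) (κ / 2)) (w t₁ / v t₁),
    max_lt (max_lt (sub_lt_self κ hgap) (half_lt_self hκ0)) hmid,
    le_max_of_le_left (le_max_of_le_right (half_pos hκ0).le), fun t => ?_⟩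
  rw [← div_le_iff₀ (P.v_pos t)]
  rcases le_total t T with ht | ht
  · exact le_max_of_le_left (le_max_of_le_left (hT t ht).le)
  rcases le_total T' t with ht' | ht'
  · exact le_max_of_le_left (le_max_of_le_right (hT' t ht').le)
  · exact le_max_of_le_right (hmax ⟨ht, ht'.trans (le_max_right T T')⟩)

theorem w_le_mul (P : IsFrontProfile b c h φ v w) {μ : ℝ} (hμ : 0 ≤ μ)
    (hχ : ∀ κ > μ, 0 < charFun b c h κ) (t : ℝ) : w t ≤ μ * v t := by
  set K := {κ : ℝ | 0 ≤ κ ∧ ∀ t, w t ≤ κ * v t}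
  have hcK : c ∈ K := ⟨P.c_pos.le, P.w_le_c_mul⟩
  have hbdd : BddBelow K := ⟨0, fun κ hκ => hκ.1⟩
  have hinf : ∀ t, w t ≤ sInf K * v t := fun t => by
    rw [← div_le_iff₀ (P.v_pos t)]
    exact le_csInf ⟨c, hcK⟩ fun κ hκ => P.ratio_le hκ.2 t
  suffices hle : sInf K ≤ μ from
    (hinf t).trans (mul_le_mul_of_nonneg_right hle (P.v_nonneg t))
  by_contra! hgt
  obtain ⟨κ, hlt, hκ⟩ :=
    P.exists_lt_w_le_mul (hμ.trans_lt hgt) (csInf_le hbdd hcK) hinf (hχ _ hgt)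
  exact hlt.not_ge (csInf_le hbdd hκ)

theorem exists_zero_charFun (P : IsFrontProfile b c h φ v w) : ∃ z > 0, charFun b c h z = 0 := by
  by_contra! hne
  have hw : ∀ t, w t = 0 := fun t => by
    refine ((P.w_le_mul le_rfl (fun κ hκ => ?_) t).trans_eq (zero_mul _)).antisymm (P.w_nonneg t)
    exact charFun_pos_of_forall_ne P.b_nonneg P.b_lt_one P.h_pos.le hκ.le
      fun z hz => hne z (hκ.trans_le hz)
  have hv0 : v 0 ≤ 0 := ge_of_tendsto P.tendsto_bot (Eventually.of_forall fun t =>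
    (eq_of_hasDerivAt_zero (fun r => hw r ▸ P.hasDerivAt_v r) 0 t).trans_le (P.v_le t))
  exact (P.v_pos 0).not_ge hv0

end IsFrontProfile

/-! ### Uniqueness -/

/-- The function `F` in the exponential weight `e^{-lam ·}`. -/
noncomputable def weighted (lam : ℝ) (F : ℝ → ℝ) (t : ℝ) : ℝ := Real.exp (-(lam * t)) * F t

section Weighted

variable {lam h : ℝ} {F φ φ' : ℝ → ℝ}

theorem exp_mul_weighted_sub (lam h : ℝ) (F : ℝ → ℝ) (t : ℝ) :
    Real.exp (-(lam * h)) * weighted lam F (t - h) = Real.exp (-(lam * t)) * F (t - h) := by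
  rw [weighted, ← mul_assoc, ← Real.exp_add]
  congr 2; ring

theorem weighted_pos {t : ℝ} (hF : 0 < F t) : 0 < weighted lam F t := mul_pos (Real.exp_pos _) hF

theorem weighted_nonneg {t : ℝ} (hF : 0 ≤ F t) : 0 ≤ weighted lam F t :=
  mul_nonneg (Real.exp_pos _).le hF

theorem tendsto_weighted_shift {A : ℝ} (hF : Tendsto (weighted lam F) atBot (nhds A)) (s : ℝ) :
    Tendsto (weighted lam fun t => F (t + s)) atBot (nhds (Real.exp (lam * s) * A)) := by
  refine ((hF.comp (tendsto_atBot_add_const_right _ s tendsto_id)).const_mul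
    (Real.exp (lam * s))).congr fun r => ?_
  simp only [weighted, Function.comp_apply, id]
  rw [← mul_assoc, ← Real.exp_add]
  congr 2; ring

theorem weighted_source_sub (lam h : ℝ) (φ φ' : ℝ → ℝ) (t : ℝ) :
    weighted lam (fun r => φ r * φ (r - h)) t - weighted lam (fun r => φ' r * φ' (r - h)) t =
      φ (t - h) * (weighted lam φ t - weighted lam φ' t) + φ' t * Real.exp (-(lam * h)) *
        (weighted lam φ (t - h) - weighted lam φ' (t - h)) := by
  have hφ := exp_mul_weighted_sub lam h φ t
  have hφ' := exp_mul_weighted_sub lam h φ' t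
  simp only [weighted] at hφ hφ' ⊢
  linear_combination φ' t * (hφ' - hφ)

theorem abs_weighted_source_sub_le (hlam : 0 ≤ lam) (hh : 0 ≤ h) {B t : ℝ} (hφ0 : 0 ≤ φ (t - h))
    (hφ'0 : 0 ≤ φ' t) (hφ : φ (t - h) ≤ B) (hφ' : φ' t ≤ B) :
    |weighted lam (fun r => φ r * φ (r - h)) t - weighted lam (fun r => φ' r * φ' (r - h)) t| ≤
      B * (|weighted lam φ t - weighted lam φ' t|
        + |weighted lam φ (t - h) - weighted lam φ' (t - h)|) := by
  have hcoef : φ' t * Real.exp (-(lam * h)) ≤ B :=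
    (mul_le_of_le_one_right hφ'0 (exp_neg_mul_le_one hlam hh)).trans hφ'
  rw [weighted_source_sub, mul_add]
  refine (abs_add_le _ _).trans ?_
  rw [abs_mul, abs_mul, abs_of_nonneg hφ0, abs_of_nonneg (mul_nonneg hφ'0 (Real.exp_pos _).le)]
  gcongr

theorem weighted_source_sub_pos {t : ℝ} (hφ : 0 < φ (t - h)) (hφ' : 0 < φ' t)
    (ht : 0 < weighted lam φ t - weighted lam φ' t)
    (hth : 0 < weighted lam φ (t - h) - weighted lam φ' (t - h)) :
    0 < weighted lam (fun r => φ r * φ (r - h)) t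
      - weighted lam (fun r => φ' r * φ' (r - h)) t := by
  rw [weighted_source_sub]
  exact add_pos (mul_pos hφ ht) (mul_pos (mul_pos hφ' (Real.exp_pos _)) hth)

end Weighted

theorem one_add_abs_le_mul_exp {x r : ℝ} (hx : 0 < x) (hr : r ≤ 0) :
    1 + |r| ≤ (1 + 1 / x) * Real.exp (-x * r) := by
  have hxr : 0 ≤ -x * r := mul_nonneg_of_nonpos_of_nonpos (neg_nonpos.2 hx.le) hr
  have hexp := Real.add_one_le_exp (-x * r)
  calc 1 + |r| = 1 + 1 / x * (-x * r) := by rw [abs_of_nonpos hr]; field_simp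
    _ ≤ 1 * Real.exp (-x * r) + 1 / x * Real.exp (-x * r) := by gcongr <;> linarith
    _ = (1 + 1 / x) * Real.exp (-x * r) := by ring

namespace IsFrontProfile

variable {b c h : ℝ} {φ v w φ' v' w' : ℝ → ℝ}

theorem isWeightedSystem (P : IsFrontProfile b c h φ v w) (S : SpectralPair b c h) :
    IsWeightedSystem S (weighted S.lam v) (weighted S.lam fun t => (S.lam + S.δ) * v t - w t)
      (weighted S.lam φ) (weighted S.lam fun t => φ t * φ (t - h)) where
  hasDerivAt_V t := (hasDerivAt_exp_neg_mul S.lam (P.hasDerivAt_v t)).congr_deriv (by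
    rw [weighted, weighted]; ring)
  hasDerivAt_a t := (hasDerivAt_exp_neg_mul S.lam
    (((P.hasDerivAt_v t).const_mul (S.lam + S.δ)).sub (P.hasDerivAt_w t))).congr_deriv (by
      simp only [weighted, Pi.sub_apply]
      rw [← S.e₁_sub, ← S.lam_mul, SpectralPair.D]
      ring)
  neutral t := by
    rw [SpectralPair.q, mul_assoc, exp_mul_weighted_sub, weighted, weighted, P.neutral t]
    ring
  continuous_Y := Continuous.mul (by fun_prop) P.continuous
  bound := by
    refine ⟨1, fun t => ?_⟩
    rw [abs_of_nonneg (weighted_nonneg (P.v_nonneg t)),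
      abs_of_nonneg (weighted_nonneg (P.nonneg t)), one_mul]
    exact ⟨mul_le_of_le_one_right (Real.exp_pos _).le ((P.v_le t).trans (P.le_one t)),
      mul_le_of_le_one_right (Real.exp_pos _).le (P.le_one t)⟩

theorem exists_weighted_source_le (P : IsFrontProfile b c h φ v w) (lam : ℝ) :
    ∃ C x, 0 < x ∧ ∀ t, weighted lam (fun r => φ r * φ (r - h)) t ≤
      C * Real.exp (x * t) * weighted lam v t := by
  obtain ⟨C, x, hx, -, hφ⟩ := P.exists_exp_bound
  refine ⟨C / (1 - b), x, hx, fun t => ?_⟩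
  have hdelay : φ (t - h) ≤ C * Real.exp (x * t) :=
    (P.mono (sub_le_self t P.h_pos.le)).trans (hφ t)
  have hsource : φ t * φ (t - h) ≤ v t / (1 - b) * (C * Real.exp (x * t)) :=
    mul_le_mul (P.le_v_div t) hdelay (P.nonneg _) ((P.nonneg t).trans (P.le_v_div t))
  calc weighted lam (fun r => φ r * φ (r - h)) t
      ≤ Real.exp (-(lam * t)) * (v t / (1 - b) * (C * Real.exp (x * t))) :=
        mul_le_mul_of_nonneg_left hsource (Real.exp_pos _).le
    _ = C / (1 - b) * Real.exp (x * t) * weighted lam v t := by rw [weighted]; ring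

variable {S : SpectralPair b c h}

theorem mul_v_sub_w_nonneg (P : IsFrontProfile b c h φ v w)
    (hχ : ∀ κ > S.lam + S.δ, 0 < charFun b c h κ) (t : ℝ) : 0 ≤ (S.lam + S.δ) * v t - w t :=
  sub_nonneg.2 (P.w_le_mul (add_nonneg S.lam_pos.le S.δ_nonneg) hχ t)

theorem exists_tendsto_pos (P : IsFrontProfile b c h φ v w)
    (hχ : ∀ κ > S.lam + S.δ, 0 < charFun b c h κ) :
    ∃ A > 0, Tendsto (weighted S.lam fun t => (S.lam + S.δ) * v t - w t) atBot (nhds A) := by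
  obtain ⟨C, x, hx, hM⟩ := P.exists_weighted_source_le S.lam
  exact (P.isWeightedSystem S).exists_tendsto_a_pos hx
    (fun t => weighted_nonneg (P.mul_v_sub_w_nonneg hχ t))
    (fun t => weighted_nonneg (P.v_nonneg t))
    (fun t => weighted_pos (mul_pos (P.pos t) (P.pos (t - h)))) hM

theorem exists_hasExpBound_weighted (P : IsFrontProfile b c h φ v w)
    (hχ : ∀ κ > S.lam + S.δ, 0 < charFun b c h κ) {y : ℝ} (hy : 0 < y) :
    ∃ K, HasExpBound (weighted S.lam φ) K (-y) 0 := by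
  obtain ⟨C, x, hx, hM⟩ := P.exists_weighted_source_le S.lam
  obtain ⟨K, hK⟩ := (P.isWeightedSystem S).exists_V_le hx
    (fun t => weighted_nonneg (P.mul_v_sub_w_nonneg hχ t))
    (fun t => weighted_nonneg (P.v_nonneg t))
    (fun t => weighted_nonneg (mul_nonneg (P.nonneg t) (P.nonneg (t - h)))) hM
  have hb : 0 < 1 - b := sub_pos.2 P.b_lt_one
  have hK0 : 0 ≤ K := by
    simpa only [abs_zero, add_zero, mul_one] using
      (weighted_nonneg (P.v_nonneg 0)).trans (hK 0 le_rfl)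
  refine ⟨K / (1 - b) * (1 + 1 / y), fun t ht => ?_⟩
  rw [abs_of_nonneg (weighted_nonneg (P.nonneg t))]
  calc weighted S.lam φ t ≤ Real.exp (-(S.lam * t)) * (v t / (1 - b)) :=
        mul_le_mul_of_nonneg_left (P.le_v_div t) (Real.exp_pos _).le
    _ = weighted S.lam v t / (1 - b) := (mul_div_assoc _ _ _).symm
    _ ≤ K * (1 + |t|) / (1 - b) := div_le_div_of_nonneg_right (hK t ht) hb.le
    _ ≤ K * ((1 + 1 / y) * Real.exp (-y * t)) / (1 - b) := by
        gcongr; exact one_add_abs_le_mul_exp hy ht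
    _ = _ := by ring

theorem exists_common_exp_bound (P : IsFrontProfile b c h φ v w)
    (P' : IsFrontProfile b c h φ' v' w') :
    ∃ C x, 0 < x ∧ 0 ≤ C ∧ ∀ t ≤ 0, φ t ≤ C * Real.exp (x * t) ∧ φ' t ≤ C * Real.exp (x * t) := by
  obtain ⟨C₁, x₁, hx₁, hC₁, hφ₁⟩ := P.exists_exp_bound
  obtain ⟨C₂, x₂, hx₂, hC₂, hφ₂⟩ := P'.exists_exp_bound
  refine ⟨C₁ + C₂, min x₁ x₂, lt_min hx₁ hx₂, add_nonneg hC₁ hC₂, fun t ht => ⟨?_, ?_⟩⟩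
  · have := mul_le_mul_of_nonpos_right (min_le_left x₁ x₂) ht
    exact (hφ₁ t).trans (by gcongr; linarith)
  · have := mul_le_mul_of_nonpos_right (min_le_right x₁ x₂) ht
    exact (hφ₂ t).trans (by gcongr; linarith)

theorem eventually_sign_sub (P : IsFrontProfile b c h φ v w) (P' : IsFrontProfile b c h φ' v' w')
    (hχ : ∀ κ > S.lam + S.δ, 0 < charFun b c h κ)
    (ha : Tendsto (fun t => weighted S.lam (fun r => (S.lam + S.δ) * v r - w r) t
      - weighted S.lam (fun r => (S.lam + S.δ) * v' r - w' r) t) atBot (nhds 0)) :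
    (∀ᶠ t in atBot, weighted S.lam v t - weighted S.lam v' t = 0) ∨
      (∀ᶠ t in atBot, 0 < weighted S.lam v t - weighted S.lam v' t) ∨
      ∀ᶠ t in atBot, weighted S.lam v t - weighted S.lam v' t < 0 := by
  obtain ⟨C, x, hx, hC, hφ⟩ := P.exists_common_exp_bound P'
  obtain ⟨K, hK⟩ := P.exists_hasExpBound_weighted hχ (half_pos hx)
  obtain ⟨K', hK'⟩ := P'.exists_hasExpBound_weighted hχ (half_pos hx)
  obtain ⟨T, hT⟩ := eventually_atBot.1 (ha.norm.eventually_le_const (norm_zero.trans_lt one_pos))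
  refine ((P.isWeightedSystem S).sub (P'.isWeightedSystem S)).eventually_sign hx hC
    (min_le_right T 0) ha (fun r hr => hT r (hr.trans (min_le_left T 0))) (fun r hr => ?_)
    ((hK.sub hK').mono (min_le_right T 0))
  have hr0 : r ≤ 0 := hr.trans (min_le_right T 0)
  exact abs_weighted_source_sub_le S.lam_pos.le S.h_pos.le (P.nonneg _) (P'.nonneg _)
    ((P.mono (sub_le_self r P.h_pos.le)).trans (hφ r hr0).1) (hφ r hr0).2

theorem not_eventually_weighted_v_lt (P : IsFrontProfile b c h φ v w)
    (P' : IsFrontProfile b c h φ' v' w')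
    (ha : Tendsto (fun t => weighted S.lam (fun r => (S.lam + S.δ) * v r - w r) t
      - weighted S.lam (fun r => (S.lam + S.δ) * v' r - w' r) t) atBot (nhds 0)) :
    ¬∀ᶠ t in atBot, 0 < weighted S.lam v t - weighted S.lam v' t :=
  ((P.isWeightedSystem S).sub (P'.isWeightedSystem S)).not_eventually_V_pos ha
    fun t => weighted_source_sub_pos (P.pos (t - h)) (P'.pos t)

theorem eq_of_eventually_weighted_v_eq (P : IsFrontProfile b c h φ v w)
    (P' : IsFrontProfile b c h φ' v' w')
    (hv : ∀ᶠ t in atBot, weighted S.lam v t - weighted S.lam v' t = 0) : φ = φ' := by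
  funext t
  have hY := ((P.isWeightedSystem S).sub (P'.isWeightedSystem S)).Y_eq_zero_of_eventually
    zero_le_one (fun t => abs_weighted_source_sub_le S.lam_pos.le S.h_pos.le (P.nonneg _)
      (P'.nonneg _) (P.le_one _) (P'.le_one _)) hv t
  exact mul_left_cancel₀ (Real.exp_pos _).ne' (sub_eq_zero.1 hY)

theorem eq_of_tendsto (P : IsFrontProfile b c h φ v w) (P' : IsFrontProfile b c h φ' v' w')
    (hχ : ∀ κ > S.lam + S.δ, 0 < charFun b c h κ) {A : ℝ}
    (hA : Tendsto (weighted S.lam fun t => (S.lam + S.δ) * v t - w t) atBot (nhds A))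
    (hA' : Tendsto (weighted S.lam fun t => (S.lam + S.δ) * v' t - w' t) atBot (nhds A)) :
    φ = φ' := by
  have ha := hA.sub hA'
  have ha' := hA'.sub hA
  rw [sub_self] at ha ha'
  rcases P.eventually_sign_sub P' hχ ha with hzero | hpos | hneg
  · exact P.eq_of_eventually_weighted_v_eq P' hzero
  · exact absurd hpos (P.not_eventually_weighted_v_lt P' ha)
  · exact absurd (hneg.mono fun t ht => sub_pos.2 (sub_neg.1 ht))
      (P'.not_eventually_weighted_v_lt P ha')

end IsFrontProfile

theorem neutral_KPP_front_unique_general (b τ c : ℝ) (hb0 : 0 ≤ b) (hb1 : b < 1)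
    (hτ : 0 < τ) (hc : 0 < c)
    (φ ψ : ℝ → ℝ) (hφ : IsMonotoneFront b c τ φ) (hψ : IsMonotoneFront b c τ ψ) :
    ∃ h : ℝ, ∀ t : ℝ, ψ t = φ (t + h) := by
  have P := hφ.isFrontProfile hb0 hb1 hτ hc
  have Q := hψ.isFrontProfile hb0 hb1 hτ hc
  obtain ⟨S, hχ⟩ := SpectralPair.exists_of_zero hb0 hb1 P.h_pos P.exists_zero_charFun
  obtain ⟨A, hA0, hA⟩ := P.exists_tendsto_pos hχ
  obtain ⟨B, hB0, hB⟩ := Q.exists_tendsto_pos hχ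
  set s := Real.log (B / A) / S.lam
  have hs : Real.exp (S.lam * s) * A = B := by
    rw [mul_div_cancel₀ _ S.lam_pos.ne', Real.exp_log (div_pos hB0 hA0), div_mul_cancel₀ _ hA0.ne']
  have hshift := hs ▸ tendsto_weighted_shift hA s
  exact ⟨s, congrFun (Q.eq_of_tendsto (P.shift s) hχ hB hshift)⟩

/-- For `b ∈ [0,1)` and `(τ,c) ∈ 𝔇`, the monotone traveling front of the
neutral KPP-Fisher equation with speed `c` is unique up to translation. -/
theorem neutral_KPP_front_unique (b τ c : ℝ) (hb0 : 0 ≤ b) (hb1 : b < 1)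
    (hτ : 0 < τ) (hc : 0 < c) (hD : inD b τ c)
    (φ ψ : ℝ → ℝ) (hφ : IsMonotoneFront b c τ φ) (hψ : IsMonotoneFront b c τ ψ) :
    ∃ h : ℝ, ∀ t : ℝ, ψ t = φ (t + h) :=
  neutral_KPP_front_unique_general b τ c hb0 hb1 hτ hc φ ψ hφ hψ
end

section
/- Let b ∈ (0,1) be fixed. There exist a finite number τ(b) > 0 and a strictly decreasing continuous function c_# : (τ(b),∞) → (0,∞) with c_#(τ) → +∞ as τ → τ(b)+ and c_#(τ) → 0 as τ → +∞, such that for all c, τ > 0: the function χ₁ has at least one negative real zero if and only if either τ ∈ (0, τ(b)], or τ > τ(b) and c ≤ c_#(τ). When negative real zeros exist there are exactly two counting multiplicity, μ₂ ≤ μ₁ < 0, and they coincide only if c = c_#(τ). Moreover, the function b ↦ τ(b) is strictly decreasing on (0,1), with τ(b) → 1/e as b → 0+ and τ(b) → 0 as b → 1−. -/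
open Filter Set

/-!
For `z < 0` put `w = -z * c * τ > 0` and `p(w) = w * (exp (-w) - b)`. The equation `χ₁(z) = 0`
becomes `(w + c² τ) * p(w) = (c τ)²`, so `p(w)` must be positive, that is `w < -log b`. On
`(0, -log b)` the left-hand side is strictly log-concave and it vanishes at both ends: it takes a
positive value exactly twice below its maximum, exactly once at the maximum and never above it.

It remains to decide when this maximum reaches `(c τ)²`. If `τ` is at most `τ(b) = max p`, it does
so at the maximizer of `p`. If `τ > τ(b)`, rewriting the equation as
`c² * (τ * (τ - p(w))) = w * p(w)` shows that it does so exactly when `c` is at most the maximum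
`c_#(τ)` of `√(w * p(w) / (τ * (τ - p(w))))` over `w`.
-/

open Real Topology

section Level

theorem intermediate_value_pair {f : ℝ → ℝ} {a d m v : ℝ} (hf : ContinuousOn f (Icc a d))
    (ha : f a < m) (hd : f d < m) (hv : v ∈ Icc a d) (hm : m < f v) :
    ∃ x ∈ Ioo a d, ∃ y ∈ Ioo a d, x < y ∧ f x = m ∧ f y = m := by
  obtain ⟨x, hx, hxm⟩ :=
    intermediate_value_Ioo hv.1 (hf.mono (Icc_subset_Icc_right hv.2)) ⟨ha, hm⟩
  obtain ⟨y, hy, hym⟩ :=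
    intermediate_value_Ioo' hv.2 (hf.mono (Icc_subset_Icc_left hv.1)) ⟨hd, hm⟩
  exact ⟨x, ⟨hx.1, hx.2.trans_le hv.2⟩, y, ⟨hv.1.trans_lt hy.1, hy.2⟩, hx.2.trans hy.1, hxm, hym⟩

variable {g : ℝ → ℝ} {s : Set ℝ} {m x y z : ℝ}

theorem strictConcaveOn_not_three_eq (hg : StrictConcaveOn ℝ s g) (hx : x ∈ s) (hz : z ∈ s)
    (hxy : x < y) (hyz : y < z) (hgx : g x = m) (hgy : g y = m) (hgz : g z = m) : False := by
  have hy : y ∈ openSegment ℝ x z := by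
    rw [openSegment_eq_Ioo (hxy.trans hyz)]
    exact ⟨hxy, hyz⟩
  simpa [hgx, hgy, hgz] using hg.lt_on_openSegment hx hz (hxy.trans hyz).ne hy

theorem strictConcaveOn_eq_or_eq (hg : StrictConcaveOn ℝ s g) (hx : x ∈ s) (hy : y ∈ s)
    (hz : z ∈ s) (hxy : x < y) (hgx : g x = m) (hgy : g y = m) (hgz : g z = m) :
    z = x ∨ z = y := by
  rcases lt_trichotomy z x with hzx | hzx | hxz
  · exact (strictConcaveOn_not_three_eq hg hz hy hzx hxy hgz hgx hgy).elim
  · exact Or.inl hzx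
  rcases lt_trichotomy z y with hzy | hzy | hyz
  · exact (strictConcaveOn_not_three_eq hg hx hy hxz hzy hgx hgz hgy).elim
  · exact Or.inr hzy
  · exact (strictConcaveOn_not_three_eq hg hx hz hxy hyz hgx hgy hgz).elim

-- The outer function `φ` lets a log-concave `f` qualify.
theorem exists_level_pair {f φ : ℝ → ℝ} {a d w : ℝ} (hf : ContinuousOn f (Icc a d))
    (hφ : StrictConcaveOn ℝ (Ioo a d) (φ ∘ f)) (ha : f a < m) (hd : f d < m)
    (hw : w ∈ Ioo a d) (hwm : f w = m) :
    ∃ x ∈ Ioo a d, ∃ y ∈ Ioo a d, x ≤ y ∧ f x = m ∧ f y = m ∧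
      (∀ v ∈ Ioo a d, f v = m → v = x ∨ v = y) ∧ (x = y → ∀ v ∈ Ioo a d, f v ≤ m) := by
  by_cases hpair : ∃ x ∈ Ioo a d, ∃ y ∈ Ioo a d, x < y ∧ f x = m ∧ f y = m
  · obtain ⟨x, hx, y, hy, hxy, hxm, hym⟩ := hpair
    have hφm : ∀ v, f v = m → (φ ∘ f) v = φ m := fun v hv => congrArg φ hv
    exact ⟨x, hx, y, hy, hxy.le, hxm, hym,
      fun v hv hvm => strictConcaveOn_eq_or_eq hφ hx hy hv hxy (hφm x hxm) (hφm y hym) (hφm v hvm),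
      fun heq => absurd heq hxy.ne⟩
  · refine ⟨w, hw, w, hw, le_rfl, hwm, hwm, fun v hv hvm => Or.inl ?_, fun _ v hv => ?_⟩
    · by_contra hne
      rcases lt_or_gt_of_ne hne with hvw | hwv
      · exact hpair ⟨v, hv, w, hw, hvw, hvm, hwm⟩
      · exact hpair ⟨w, hw, v, hv, hwv, hwm, hvm⟩
    · exact not_lt.1 fun hlt =>
        hpair (intermediate_value_pair hf ha hd (Ioo_subset_Icc_self hv) hlt)

theorem concaveOn_log_comp {E : Type*} [AddCommMonoid E] [Module ℝ E] {s : Set E} {f : E → ℝ}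
    (hf : ConcaveOn ℝ s f) (hpos : ∀ x ∈ s, 0 < f x) : ConcaveOn ℝ s fun x => log (f x) :=
  ⟨hf.1, fun x hx y hy _ _ ha hb hab =>
    (strictConcaveOn_log_Ioi.concaveOn.2 (hpos x hx) (hpos y hy) ha hb hab).trans <|
      log_le_log (convex_Ioi (0 : ℝ) (hpos x hx) (hpos y hy) ha hb hab)
        (hf.2 hx hy ha hb hab)⟩

end Level

section DelayProfile

/-- The function `p(w) = w (e^{-w} - b)`, whose maximum over `w > 0` is the critical delay. -/
noncomputable def delayProfile (b w : ℝ) : ℝ := w * (exp (-w) - b)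

/-- The critical delay `τ(b)`: the maximum of `delayProfile b`, taken over the compact interval on
which it is nonnegative. -/
noncomputable def critDelay (b : ℝ) : ℝ := sSup (delayProfile b '' Icc 0 (-log b))

variable {b w : ℝ}

@[fun_prop]
theorem continuous_delayProfile (b : ℝ) : Continuous (delayProfile b) := by
  unfold delayProfile; fun_prop

theorem delayProfile_pos_iff (hb : b ∈ Ioo (0 : ℝ) 1) :
    0 < delayProfile b w ↔ w ∈ Ioo 0 (-log b) := by
  have hexp : ∀ {v}, 0 < exp (-v) - b ↔ v < -log b := fun {v} => by
    rw [sub_pos, ← log_lt_iff_lt_exp hb.1, lt_neg]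
  have hlog : log b < 0 := log_neg hb.1 hb.2
  refine ⟨fun h => ?_, fun h => mul_pos h.1 (hexp.2 h.2)⟩
  rcases pos_and_pos_or_neg_and_neg_of_mul_pos h with ⟨hw, hwb⟩ | ⟨hw, hwb⟩
  · exact ⟨hw, hexp.1 hwb⟩
  · exact absurd (hexp.2 (by linarith)) hwb.not_gt

theorem delayProfile_le_critDelay (hb : b ∈ Ioo (0 : ℝ) 1) (w : ℝ) :
    delayProfile b w ≤ critDelay b := by
  have hle : ∀ v ∈ Icc 0 (-log b), delayProfile b v ≤ critDelay b := fun _ hv =>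
    (continuous_delayProfile b).continuousOn.le_sSup_image_Icc hv
  rcases le_or_gt (delayProfile b w) 0 with hneg | hpos
  · have hzero := hle 0 ⟨le_rfl, neg_nonneg.2 (log_neg hb.1 hb.2).le⟩
    exact hneg.trans (by simpa [delayProfile] using hzero)
  · exact hle w (Ioo_subset_Icc_self ((delayProfile_pos_iff hb).1 hpos))

theorem critDelay_pos (hb : b ∈ Ioo (0 : ℝ) 1) : 0 < critDelay b := by
  have hlog : log b < 0 := log_neg hb.1 hb.2
  have hmid : -log b / 2 ∈ Ioo 0 (-log b) := ⟨by linarith, by linarith⟩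
  exact ((delayProfile_pos_iff hb).2 hmid).trans_le (delayProfile_le_critDelay hb _)

theorem exists_delayProfile_eq_critDelay (hb : b ∈ Ioo (0 : ℝ) 1) :
    ∃ w ∈ Ioo 0 (-log b), delayProfile b w = critDelay b := by
  obtain ⟨w, -, hw⟩ := isCompact_Icc.exists_sSup_image_eq
    (nonempty_Icc.2 (neg_nonneg.2 (log_neg hb.1 hb.2).le))
    (continuous_delayProfile b).continuousOn
  exact ⟨w, (delayProfile_pos_iff hb).1 (hw ▸ critDelay_pos hb), hw.symm⟩

theorem strictAntiOn_critDelay : StrictAntiOn critDelay (Ioo 0 1) := by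
  intro a ha b hb hab
  obtain ⟨w, hw, heq⟩ := exists_delayProfile_eq_critDelay hb
  calc critDelay b = delayProfile b w := heq.symm
    _ < delayProfile a w := mul_lt_mul_of_pos_left (sub_lt_sub_left hab _) hw.1
    _ ≤ critDelay a := delayProfile_le_critDelay ha w

theorem exp_neg_one_sub_le_critDelay (hb : b ∈ Ioo (0 : ℝ) 1) : exp (-1) - b ≤ critDelay b := by
  simpa [delayProfile] using delayProfile_le_critDelay hb 1

theorem critDelay_le_exp_neg_one (hb : b ∈ Ioo (0 : ℝ) 1) : critDelay b ≤ exp (-1) := by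
  obtain ⟨w, hw, heq⟩ := exists_delayProfile_eq_critDelay hb
  calc critDelay b = w * exp (-w) - w * b := by rw [← heq, delayProfile, mul_sub]
    _ ≤ w * exp (-w) := sub_le_self _ (mul_pos hw.1 hb.1).le
    _ ≤ exp (-1) := mul_exp_neg_le_exp_neg_one w

theorem critDelay_le_neg_log (hb : b ∈ Ioo (0 : ℝ) 1) : critDelay b ≤ -log b := by
  obtain ⟨w, hw, heq⟩ := exists_delayProfile_eq_critDelay hb
  have hexp : exp (-w) ≤ 1 := exp_le_one_iff.2 (neg_nonpos.2 hw.1.le)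
  calc critDelay b = w * (exp (-w) - b) := heq.symm
    _ ≤ w := mul_le_of_le_one_right hw.1.le (by linarith [hb.1])
    _ ≤ -log b := hw.2.le

theorem tendsto_critDelay_zero : Tendsto critDelay (𝓝[>] 0) (𝓝 (exp 1)⁻¹) := by
  have hlower : Tendsto (fun b : ℝ => exp (-1) - b) (𝓝[>] 0) (𝓝 (exp (-1))) :=
    ((continuous_sub_left _).tendsto' 0 _ (sub_zero _)).mono_left nhdsWithin_le_nhds
  have hmem : ∀ᶠ b in 𝓝[>] (0 : ℝ), b ∈ Ioo (0 : ℝ) 1 := Ioo_mem_nhdsGT one_pos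
  rw [← exp_neg]
  exact tendsto_of_tendsto_of_tendsto_of_le_of_le' hlower tendsto_const_nhds
    (hmem.mono fun _ => exp_neg_one_sub_le_critDelay) (hmem.mono fun _ => critDelay_le_exp_neg_one)

theorem tendsto_critDelay_one : Tendsto critDelay (𝓝[<] 1) (𝓝 0) := by
  have hupper : Tendsto (fun b : ℝ => -log b) (𝓝[<] 1) (𝓝 0) := by
    have hcont : ContinuousAt (fun b : ℝ => -log b) 1 := (continuousAt_log one_ne_zero).neg
    simpa using hcont.tendsto.mono_left nhdsWithin_le_nhds
  have hmem : ∀ᶠ b in 𝓝[<] (1 : ℝ), b ∈ Ioo (0 : ℝ) 1 := Ioo_mem_nhdsLT one_pos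
  exact tendsto_of_tendsto_of_tendsto_of_le_of_le' tendsto_const_nhds hupper
    (hmem.mono fun _ hb => (critDelay_pos hb).le) (hmem.mono fun _ => critDelay_le_neg_log)

end DelayProfile

section LevelFun

/-- The left-hand side of the equation `(w + k) p(w) = (c τ)²`, whose positive solutions `w` for
`k = c² τ` are the numbers `-z c τ` attached to the negative zeros `z` of `χ₁`. -/
noncomputable def levelFun (b k w : ℝ) : ℝ := (w + k) * delayProfile b w

variable {b k w : ℝ}

theorem continuous_levelFun (b k : ℝ) : Continuous (levelFun b k) := by
  unfold levelFun; fun_prop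

theorem levelFun_zero (b k : ℝ) : levelFun b k 0 = 0 := by
  simp [levelFun, delayProfile]

theorem levelFun_neg_log (hb : 0 < b) (k : ℝ) : levelFun b k (-log b) = 0 := by
  simp [levelFun, delayProfile, exp_log hb]

theorem mem_Ioo_of_levelFun_pos (hb : b ∈ Ioo (0 : ℝ) 1) (hk : 0 ≤ k) (hw : 0 < w)
    (hpos : 0 < levelFun b k w) : w ∈ Ioo 0 (-log b) :=
  (delayProfile_pos_iff hb).1 (pos_of_mul_pos_right hpos (by positivity))

theorem strictConcaveOn_log_levelFun (hb : 0 < b) (hk : 0 ≤ k) :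
    StrictConcaveOn ℝ (Ioo 0 (-log b)) (log ∘ levelFun b k) := by
  have hconvex : Convex ℝ (Ioo 0 (-log b)) := convex_Ioo _ _
  have hshift : ∀ w ∈ Ioo 0 (-log b), 0 < w + k := fun w hw => add_pos_of_pos_of_nonneg hw.1 hk
  have hfactor : ∀ w ∈ Ioo 0 (-log b), 0 < 1 - b * exp w := fun w hw => by
    have hlt : exp w < b⁻¹ := by simpa [exp_neg, exp_log hb] using exp_lt_exp.2 hw.2
    rwa [sub_pos, ← lt_inv_mul_iff₀ hb, mul_one]
  have hlog : StrictConcaveOn ℝ (Ioo 0 (-log b)) log :=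
    strictConcaveOn_log_Ioi.subset Ioo_subset_Ioi_self hconvex
  have hlog_shift : ConcaveOn ℝ (Ioo 0 (-log b)) fun w => log (w + k) :=
    concaveOn_log_comp ((concaveOn_id hconvex).add_const k) hshift
  have hlog_factor : ConcaveOn ℝ (Ioo 0 (-log b)) fun w => log (1 - b * exp w) :=
    concaveOn_log_comp ((concaveOn_const 1 hconvex).sub
      ((convexOn_exp.subset (subset_univ _) hconvex).smul hb.le)) hfactor
  refine (((hlog.add_concaveOn hlog_shift).add_concaveOn hlog_factor).add_concaveOn
    (convexOn_id hconvex).neg).congr fun w hw => ?_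
  have hsplit : levelFun b k w = w * (w + k) * (1 - b * exp w) * exp (-w) := by
    have hexp : exp w * exp (-w) = 1 := by rw [← exp_add, add_neg_cancel, exp_zero]
    rw [levelFun, delayProfile]
    linear_combination w * (w + k) * b * hexp
  have hw0 := hw.1.ne'
  have hshift0 := (hshift w hw).ne'
  have hfactor0 := (hfactor w hw).ne'
  simp only [Function.comp_apply, Pi.add_apply, Pi.neg_apply, id_eq]
  rw [hsplit, log_mul (by positivity) (exp_pos _).ne', log_mul (by positivity) hfactor0,
    log_mul hw0 hshift0, log_exp]

end LevelFun

section Zeros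

variable {b c τ w z : ℝ}

-- Both denominators vanish together, and then both quotients are `0`.
theorem chi1_eq_sub_inv (b c τ z : ℝ) :
    chi1 b c τ z = z ^ 2 - c * z - (exp (z * c * τ) - b)⁻¹ := by
  have hE := (exp_pos (z * c * τ)).ne'
  have hsplit : exp (z * c * τ) - b = (1 - b * (exp (z * c * τ))⁻¹) / (exp (z * c * τ))⁻¹ := by
    field_simp
  rw [chi1, exp_neg, hsplit, inv_div]

theorem chi1_neg_div_eq_zero_iff (hc : 0 < c) (hτ : 0 < τ) (hw : 0 < w) :
    chi1 b c τ (-(w / (c * τ))) = 0 ↔ levelFun b (c ^ 2 * τ) w = (c * τ) ^ 2 := by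
  have hq : 0 < w / (c * τ) * (w / (c * τ) + c) := by positivity
  have hexp : -(w / (c * τ)) * c * τ = -w := by field_simp
  have hlevel : levelFun b (c ^ 2 * τ) w =
      (c * τ) ^ 2 * (w / (c * τ) * (w / (c * τ) + c) * (exp (-w) - b)) := by
    rw [levelFun, delayProfile]; field_simp
  rw [chi1_eq_sub_inv, hexp, hlevel, mul_eq_left₀ (by positivity), mul_eq_one_iff_inv_eq₀ hq.ne',
    inv_eq_iff_eq_inv, sub_eq_zero]
  ring_nf

theorem exists_pos_eq_neg_div {a : ℝ} (ha : 0 < a) (hz : z < 0) : ∃ w > 0, z = -(w / a) :=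
  ⟨-z * a, mul_pos (neg_pos.2 hz) ha, by field_simp⟩

theorem chi1_neg_div_eq_zero_iff_mem (hb : b ∈ Ioo (0 : ℝ) 1) (hc : 0 < c) (hτ : 0 < τ)
    (hw : 0 < w) :
    chi1 b c τ (-(w / (c * τ))) = 0 ↔
      w ∈ Ioo 0 (-log b) ∧ levelFun b (c ^ 2 * τ) w = (c * τ) ^ 2 := by
  rw [chi1_neg_div_eq_zero_iff hc hτ hw, iff_and_self]
  intro h
  have hpos : 0 < levelFun b (c ^ 2 * τ) w := by rw [h]; positivity
  exact mem_Ioo_of_levelFun_pos hb (by positivity) hw hpos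

theorem exists_chi1_zero_iff_exists_le (hb : b ∈ Ioo (0 : ℝ) 1) (hc : 0 < c) (hτ : 0 < τ) :
    (∃ z < 0, chi1 b c τ z = 0) ↔
      ∃ w ∈ Ioo 0 (-log b), (c * τ) ^ 2 ≤ levelFun b (c ^ 2 * τ) w := by
  have hcτ : 0 < c * τ := mul_pos hc hτ
  constructor
  · rintro ⟨z, hz, hz0⟩
    obtain ⟨w, hw, rfl⟩ := exists_pos_eq_neg_div hcτ hz
    obtain ⟨hmem, heq⟩ := (chi1_neg_div_eq_zero_iff_mem hb hc hτ hw).1 hz0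
    exact ⟨w, hmem, heq.ge⟩
  · rintro ⟨w, hw, hle⟩
    obtain ⟨x, hx, hxm⟩ := intermediate_value_Ioc hw.1.le
      (continuous_levelFun b (c ^ 2 * τ)).continuousOn
      ⟨(levelFun_zero b _).trans_lt (pow_pos hcτ 2), hle⟩
    exact ⟨-(x / (c * τ)), neg_neg_of_pos (div_pos hx.1 hcτ),
      (chi1_neg_div_eq_zero_iff hc hτ hx.1).2 hxm⟩

theorem exists_chi1_zero_pair (hb : b ∈ Ioo (0 : ℝ) 1) (hc : 0 < c) (hτ : 0 < τ)
    (hex : ∃ z < 0, chi1 b c τ z = 0) :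
    ∃ μ₂ μ₁, μ₂ ≤ μ₁ ∧ μ₁ < 0 ∧ chi1 b c τ μ₂ = 0 ∧ chi1 b c τ μ₁ = 0 ∧
      (∀ z < 0, chi1 b c τ z = 0 → z = μ₂ ∨ z = μ₁) ∧
      (μ₂ = μ₁ → ∀ w ∈ Ioo 0 (-log b), levelFun b (c ^ 2 * τ) w ≤ (c * τ) ^ 2) := by
  have hcτ : 0 < c * τ := mul_pos hc hτ
  have hzero : ∀ {v}, 0 < v → (chi1 b c τ (-(v / (c * τ))) = 0 ↔ _) :=
    chi1_neg_div_eq_zero_iff_mem hb hc hτ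
  obtain ⟨z, hz, hz0⟩ := hex
  obtain ⟨w, hw, rfl⟩ := exists_pos_eq_neg_div hcτ hz
  obtain ⟨hmem, heq⟩ := (hzero hw).1 hz0
  obtain ⟨x, hx, y, hy, hxy, hxm, hym, hall, hmax⟩ := exists_level_pair
    (continuous_levelFun b (c ^ 2 * τ)).continuousOn
    (strictConcaveOn_log_levelFun hb.1 (by positivity))
    ((levelFun_zero b _).trans_lt (pow_pos hcτ 2))
    ((levelFun_neg_log hb.1 _).trans_lt (pow_pos hcτ 2)) hmem heq
  refine ⟨-(y / (c * τ)), -(x / (c * τ)), by gcongr, neg_neg_of_pos (div_pos hx.1 hcτ),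
    (hzero hy.1).2 ⟨hy, hym⟩, (hzero hx.1).2 ⟨hx, hxm⟩, fun z hz hz0 => ?_, fun h => hmax ?_⟩
  · obtain ⟨v, hv, rfl⟩ := exists_pos_eq_neg_div hcτ hz
    obtain ⟨hvmem, hvm⟩ := (hzero hv).1 hz0
    rcases hall v hvmem hvm with rfl | rfl
    · exact Or.inr rfl
    · exact Or.inl rfl
  · exact ((div_left_inj' hcτ.ne').1 (neg_injective h)).symm

end Zeros

section Speed

/-- The speed `c` for which `-w / (c τ)` is a zero of `χ₁`, when `w ∈ (0, -log b)` and `τ > τ(b)`;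
the second condition keeps the denominator away from `0`. -/
noncomputable def speed (b τ w : ℝ) : ℝ :=
  √(w * delayProfile b w / (τ * (τ - delayProfile b w)))

/-- The critical speed `c_#(τ)`: the maximum of `speed b τ`, meaningful for `τ > τ(b)`. -/
noncomputable def critSpeed (b τ : ℝ) : ℝ := sSup (speed b τ '' Icc 0 (-log b))

variable {b c τ w : ℝ}

theorem levelFun_sub_sq (b c τ w : ℝ) :
    levelFun b (c ^ 2 * τ) w - (c * τ) ^ 2 =
      w * delayProfile b w - c ^ 2 * (τ * (τ - delayProfile b w)) := by
  rw [levelFun]; ring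

theorem sq_le_levelFun_iff (hc : 0 < c) (hτ : 0 < τ) (hw : delayProfile b w < τ) :
    (c * τ) ^ 2 ≤ levelFun b (c ^ 2 * τ) w ↔ c ≤ speed b τ w := by
  rw [speed, le_sqrt' hc, le_div_iff₀ (mul_pos hτ (sub_pos.2 hw)), ← sub_nonneg, levelFun_sub_sq,
    sub_nonneg]

theorem sq_lt_levelFun_iff (hc : 0 ≤ c) (hτ : 0 < τ) (hw : delayProfile b w < τ) :
    (c * τ) ^ 2 < levelFun b (c ^ 2 * τ) w ↔ c < speed b τ w := by
  rw [speed, lt_sqrt hc, lt_div_iff₀ (mul_pos hτ (sub_pos.2 hw)), ← sub_pos, levelFun_sub_sq,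
    sub_pos]

theorem delayProfile_lt (hb : b ∈ Ioo (0 : ℝ) 1) (hτ : critDelay b < τ) (w : ℝ) :
    delayProfile b w < τ :=
  (delayProfile_le_critDelay hb w).trans_lt hτ

theorem speed_denom_pos (hb : b ∈ Ioo (0 : ℝ) 1) (hτ : critDelay b < τ) (w : ℝ) :
    0 < τ * (τ - delayProfile b w) :=
  mul_pos ((critDelay_pos hb).trans hτ) (sub_pos.2 (delayProfile_lt hb hτ w))

theorem speed_pos_iff (hb : b ∈ Ioo (0 : ℝ) 1) (hτ : critDelay b < τ) (hw : 0 ≤ w) :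
    0 < speed b τ w ↔ w ∈ Ioo 0 (-log b) := by
  rw [speed, sqrt_pos, div_pos_iff_of_pos_right (speed_denom_pos hb hτ w),
    ← delayProfile_pos_iff hb]
  exact ⟨fun h => pos_of_mul_pos_right h hw,
    fun h => mul_pos ((delayProfile_pos_iff hb).1 h).1 h⟩

theorem continuous_speed (hb : b ∈ Ioo (0 : ℝ) 1) :
    Continuous fun p : Ioi (critDelay b) × ℝ => speed b p.1 p.2 := by
  unfold speed
  refine Continuous.sqrt (Continuous.div (by fun_prop) (by fun_prop) fun p => ?_)
  exact (speed_denom_pos hb p.1.2 p.2).ne'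

theorem continuous_speed_right (hb : b ∈ Ioo (0 : ℝ) 1) (hτ : critDelay b < τ) :
    Continuous (speed b τ) :=
  (continuous_speed hb).comp (Continuous.prodMk_right (⟨τ, hτ⟩ : Ioi (critDelay b)))

theorem strictAntiOn_speed (hb : b ∈ Ioo (0 : ℝ) 1) (hw : w ∈ Ioo 0 (-log b)) :
    StrictAntiOn (fun τ => speed b τ w) (Ioi (critDelay b)) := by
  intro s hs t ht hst
  have hs0 : 0 < s := (critDelay_pos hb).trans hs
  have hnum : 0 < w * delayProfile b w := mul_pos hw.1 ((delayProfile_pos_iff hb).2 hw)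
  have hden : s * (s - delayProfile b w) < t * (t - delayProfile b w) :=
    mul_lt_mul'' hst (sub_lt_sub_right hst _) hs0.le (sub_pos.2 (delayProfile_lt hb hs w)).le
  exact sqrt_lt_sqrt (div_pos hnum (speed_denom_pos hb ht w)).le
    (div_lt_div_of_pos_left hnum (speed_denom_pos hb hs w) hden)

theorem speed_le_critSpeed (hb : b ∈ Ioo (0 : ℝ) 1) (hτ : critDelay b < τ)
    (hw : w ∈ Ioo 0 (-log b)) : speed b τ w ≤ critSpeed b τ :=
  (continuous_speed_right hb hτ).continuousOn.le_sSup_image_Icc (Ioo_subset_Icc_self hw)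

theorem critSpeed_pos (hb : b ∈ Ioo (0 : ℝ) 1) (hτ : critDelay b < τ) : 0 < critSpeed b τ := by
  obtain ⟨w, hw, -⟩ := exists_delayProfile_eq_critDelay hb
  exact ((speed_pos_iff hb hτ hw.1.le).2 hw).trans_le (speed_le_critSpeed hb hτ hw)

theorem exists_speed_eq_critSpeed (hb : b ∈ Ioo (0 : ℝ) 1) (hτ : critDelay b < τ) :
    ∃ w ∈ Ioo 0 (-log b), speed b τ w = critSpeed b τ := by
  obtain ⟨w, hw, heq⟩ := isCompact_Icc.exists_sSup_image_eq
    (nonempty_Icc.2 (neg_nonneg.2 (log_neg hb.1 hb.2).le))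
    (continuous_speed_right hb hτ).continuousOn
  exact ⟨w, (speed_pos_iff hb hτ hw.1).1 (heq ▸ critSpeed_pos hb hτ), heq.symm⟩

theorem continuousOn_critSpeed (hb : b ∈ Ioo (0 : ℝ) 1) :
    ContinuousOn (critSpeed b) (Ioi (critDelay b)) := by
  rw [continuousOn_iff_continuous_domRestrict]
  exact isCompact_Icc.continuous_sSup (f := fun (t : Ioi (critDelay b)) w => speed b t w)
    (continuous_speed hb)

theorem strictAntiOn_critSpeed (hb : b ∈ Ioo (0 : ℝ) 1) :
    StrictAntiOn (critSpeed b) (Ioi (critDelay b)) := by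
  intro s hs t ht hst
  obtain ⟨w, hw, heq⟩ := exists_speed_eq_critSpeed hb ht
  calc critSpeed b t = speed b t w := heq.symm
    _ < speed b s w := strictAntiOn_speed hb hw hs ht hst
    _ ≤ critSpeed b s := speed_le_critSpeed hb hs hw

theorem tendsto_critSpeed_critDelay (hb : b ∈ Ioo (0 : ℝ) 1) :
    Tendsto (critSpeed b) (𝓝[>] critDelay b) atTop := by
  obtain ⟨w, hw, heq⟩ := exists_delayProfile_eq_critDelay hb
  have hnum : 0 < w * delayProfile b w := mul_pos hw.1 ((delayProfile_pos_iff hb).2 hw)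
  have hden : Tendsto (fun t => t * (t - delayProfile b w)) (𝓝[>] critDelay b) (𝓝[>] 0) := by
    have hcont : Continuous fun t => t * (t - delayProfile b w) := by fun_prop
    exact tendsto_nhdsWithin_iff.2
      ⟨(hcont.tendsto' _ _ (by simp [heq])).mono_left nhdsWithin_le_nhds,
        eventually_mem_nhdsWithin.mono fun t ht => speed_denom_pos hb ht w⟩
  have hspeed : Tendsto (fun t => speed b t w) (𝓝[>] critDelay b) atTop :=
    tendsto_sqrt_atTop.comp ((tendsto_inv_nhdsGT_zero.comp hden).const_mul_atTop hnum)
  exact tendsto_atTop_mono' _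
    (eventually_mem_nhdsWithin.mono fun t ht => speed_le_critSpeed hb ht hw) hspeed

theorem critSpeed_le_sqrt (hb : b ∈ Ioo (0 : ℝ) 1) (hτ : critDelay b + 1 ≤ τ) :
    critSpeed b τ ≤ √(-log b * critDelay b / τ) := by
  have hlt : critDelay b < τ := (lt_add_one _).trans_le hτ
  have hτ0 : 0 < τ := (critDelay_pos hb).trans hlt
  obtain ⟨w, hw, heq⟩ := exists_speed_eq_critSpeed hb hlt
  have hp := delayProfile_le_critDelay hb w
  have hp0 := ((delayProfile_pos_iff hb).2 hw).le
  have hL : 0 ≤ -log b := (hw.1.trans hw.2).le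
  rw [← heq]
  exact sqrt_le_sqrt <| div_le_div₀ (mul_nonneg hL (critDelay_pos hb).le)
    (mul_le_mul hw.2.le hp hp0 hL) hτ0 (le_mul_of_one_le_right hτ0.le (by linarith))

theorem tendsto_critSpeed_atTop (hb : b ∈ Ioo (0 : ℝ) 1) :
    Tendsto (critSpeed b) atTop (𝓝 0) := by
  have hupper : Tendsto (fun t : ℝ => √(-log b * critDelay b / t)) atTop (𝓝 0) := by
    simpa using ((tendsto_const_nhds (x := -log b * critDelay b)).div_atTop tendsto_id).sqrt
  exact tendsto_of_tendsto_of_tendsto_of_le_of_le' tendsto_const_nhds hupper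
    ((eventually_gt_atTop _).mono fun _ ht => (critSpeed_pos hb ht).le)
    ((eventually_ge_atTop _).mono fun _ ht => critSpeed_le_sqrt hb ht)

end Speed

section Threshold

variable {b c τ : ℝ}

theorem exists_sq_lt_levelFun_of_le_critDelay (hb : b ∈ Ioo (0 : ℝ) 1) (hτ : 0 < τ)
    (hle : τ ≤ critDelay b) :
    ∃ w ∈ Ioo 0 (-log b), (c * τ) ^ 2 < levelFun b (c ^ 2 * τ) w := by
  obtain ⟨w, hw, heq⟩ := exists_delayProfile_eq_critDelay hb
  refine ⟨w, hw, ?_⟩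
  calc (c * τ) ^ 2 = c ^ 2 * τ * τ := by ring
    _ ≤ c ^ 2 * τ * critDelay b := by gcongr
    _ < (w + c ^ 2 * τ) * critDelay b :=
      mul_lt_mul_of_pos_right (lt_add_of_pos_left _ hw.1) (critDelay_pos hb)
    _ = levelFun b (c ^ 2 * τ) w := by rw [levelFun, heq]

theorem exists_sq_le_levelFun_iff (hb : b ∈ Ioo (0 : ℝ) 1) (hc : 0 < c) (hτ : 0 < τ) :
    (∃ w ∈ Ioo 0 (-log b), (c * τ) ^ 2 ≤ levelFun b (c ^ 2 * τ) w) ↔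
      τ ≤ critDelay b ∨ (critDelay b < τ ∧ c ≤ critSpeed b τ) := by
  rcases le_or_gt τ (critDelay b) with hle | hlt
  · obtain ⟨w, hw, hlevel⟩ := exists_sq_lt_levelFun_of_le_critDelay (c := c) hb hτ hle
    exact iff_of_true ⟨w, hw, hlevel.le⟩ (Or.inl hle)
  simp only [hlt, hlt.not_ge, false_or, true_and,
    sq_le_levelFun_iff hc hτ (delayProfile_lt hb hlt _)]
  refine ⟨fun ⟨w, hw, h⟩ => h.trans (speed_le_critSpeed hb hlt hw), fun h => ?_⟩
  obtain ⟨w, hw, heq⟩ := exists_speed_eq_critSpeed hb hlt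
  exact ⟨w, hw, h.trans_eq heq.symm⟩

theorem critSpeed_le_of_forall_levelFun_le (hb : b ∈ Ioo (0 : ℝ) 1) (hc : 0 ≤ c) (hτ : 0 < τ)
    (hmax : ∀ w ∈ Ioo 0 (-log b), levelFun b (c ^ 2 * τ) w ≤ (c * τ) ^ 2) :
    critDelay b < τ ∧ critSpeed b τ ≤ c := by
  have hlt : critDelay b < τ := not_le.1 fun hle => by
    obtain ⟨w, hw, hlevel⟩ := exists_sq_lt_levelFun_of_le_critDelay (c := c) hb hτ hle
    exact hlevel.not_ge (hmax w hw)
  obtain ⟨w, hw, heq⟩ := exists_speed_eq_critSpeed hb hlt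
  rw [← heq]
  exact ⟨hlt, not_lt.1 fun h =>
    ((sq_lt_levelFun_iff hc hτ (delayProfile_lt hb hlt w)).2 h).not_ge (hmax w hw)⟩

end Threshold

/-- There is a critical delay function `b ↦ τ(b)`, strictly decreasing on
`(0,1)` with `τ(0+) = 1/e` and `τ(1−) = 0`, and for each `b ∈ (0,1)` a strictly decreasing
continuous function `c_# : (τ(b),∞) → (0,∞)` with `c_#(τ(b)+) = +∞`, `c_#(+∞) = 0`, such
that `χ₁` has a negative real zero iff either `τ ≤ τ(b)`, or `τ > τ(b)` and `c ≤ c_#(τ)`;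
when negative zeros exist there are exactly two counting multiplicity, `μ₂ ≤ μ₁ < 0`,
coinciding only when `c = c_#(τ)`. -/
theorem critical_speed_csharp :
    ∃ τcrit : ℝ → ℝ,
      StrictAntiOn τcrit (Set.Ioo 0 1) ∧
      Tendsto τcrit (nhdsWithin 0 (Set.Ioi 0)) (nhds (Real.exp 1)⁻¹) ∧
      Tendsto τcrit (nhdsWithin 1 (Set.Iio 1)) (nhds 0) ∧
      ∀ b ∈ Set.Ioo (0 : ℝ) 1,
        0 < τcrit b ∧
        ∃ csharp : ℝ → ℝ,
          ContinuousOn csharp (Set.Ioi (τcrit b)) ∧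
          StrictAntiOn csharp (Set.Ioi (τcrit b)) ∧
          (∀ τ > τcrit b, 0 < csharp τ) ∧
          Tendsto csharp (nhdsWithin (τcrit b) (Set.Ioi (τcrit b))) atTop ∧
          Tendsto csharp atTop (nhds 0) ∧
          ∀ c > (0 : ℝ), ∀ τ > (0 : ℝ),
            ((∃ z < (0 : ℝ), chi1 b c τ z = 0) ↔
              (τ ≤ τcrit b ∨ (τcrit b < τ ∧ c ≤ csharp τ))) ∧
            ((∃ z < (0 : ℝ), chi1 b c τ z = 0) →
              ∃ μ₂ μ₁ : ℝ, μ₂ ≤ μ₁ ∧ μ₁ < 0 ∧ chi1 b c τ μ₂ = 0 ∧ chi1 b c τ μ₁ = 0 ∧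
                (∀ z < (0 : ℝ), chi1 b c τ z = 0 → z = μ₂ ∨ z = μ₁) ∧
                (μ₂ = μ₁ → τcrit b < τ ∧ c = csharp τ)) := by
  refine ⟨critDelay, strictAntiOn_critDelay, tendsto_critDelay_zero, tendsto_critDelay_one,
    fun b hb => ⟨critDelay_pos hb, critSpeed b, continuousOn_critSpeed hb,
      strictAntiOn_critSpeed hb, fun τ hτ => critSpeed_pos hb hτ, tendsto_critSpeed_critDelay hb,
      tendsto_critSpeed_atTop hb, fun c hc τ hτ => ?_⟩⟩
  have hiff := (exists_chi1_zero_iff_exists_le hb hc hτ).trans (exists_sq_le_levelFun_iff hb hc hτ)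
  refine ⟨hiff, fun hex => ?_⟩
  obtain ⟨μ₂, μ₁, hle, hneg, hμ₂, hμ₁, hall, hmax⟩ := exists_chi1_zero_pair hb hc hτ hex
  refine ⟨μ₂, μ₁, hle, hneg, hμ₂, hμ₁, hall, fun heq => ?_⟩
  obtain ⟨hlt, hcrit⟩ := critSpeed_le_of_forall_levelFun_le hb hc.le hτ (hmax heq)
  exact ⟨hlt, ((hiff.1 hex).resolve_left hlt.not_ge).2.antisymm hcrit⟩
end
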